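/- arXiv:2406.07838 — 4 statements merged into one kernel-verified Lean document; each statement's English description precedes it below -/
import Mathlib

section
/- Let (N_k)_{k ≥ 0} be a sequence of positive integers of at most polynomial growth, i.e., there exist real a, p > 0 with N_k ≤ a·(k+1)^p for all k. For each n ≥ 1 let N^{(n)} = (N_0, …, N_{n−1}, −∑_{i=0}^{n−1} N_i). Then the ratio log K_n(N^{(n)}) / (sup_{f ∈ F_n(N^{(n)})} H(f)) tends to 1 as n → ∞. -/
open Finset

/-- The entropy-like function `h(t) = (t+1)·log(t+1) − t·log t` (with `h 0 = 0`
since `Real.log 0 = 0`). -/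
noncomputable def entH (t : ℝ) : ℝ := (t + 1) * Real.log (t + 1) - t * Real.log t

/-- `f` is an integer flow on the complete graph `k_{n+1}` with netflow `N`:
`f i j` is the flow on the edge `(i,j)` for `i < j`, it vanishes for `i ≥ j`,
and the netflow at each vertex `i` is `N i`. -/
def IsIntFlow (n : ℕ) (N : Fin (n + 1) → ℤ) (f : Fin (n + 1) → Fin (n + 1) → ℕ) : Prop :=
  (∀ i j : Fin (n + 1), ¬ i < j → f i j = 0) ∧
  ∀ i : Fin (n + 1),
    (∑ j : Fin (n + 1), if i < j then (f i j : ℤ) else 0) -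
      (∑ k : Fin (n + 1), if k < i then (f k i : ℤ) else 0) = N i

/-- The Kostant partition function: the number of integer flows on the complete
graph `k_{n+1}` with netflow `N`. -/
noncomputable def Kn (n : ℕ) (N : Fin (n + 1) → ℤ) : ℕ :=
  Nat.card {f : Fin (n + 1) → Fin (n + 1) → ℕ // IsIntFlow n N f}

/-- The flow polytope of the complete graph `k_{n+1}` with netflow `N`. -/
def FlowPolytope (n : ℕ) (N : Fin (n + 1) → ℝ) : Set (Fin (n + 1) → Fin (n + 1) → ℝ) :=
  {f | (∀ i j : Fin (n + 1), i < j → 0 ≤ f i j) ∧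
    (∀ i j : Fin (n + 1), ¬ i < j → f i j = 0) ∧
    ∀ i : Fin (n + 1),
      (∑ j : Fin (n + 1), if i < j then f i j else 0) -
        (∑ k : Fin (n + 1), if k < i then f k i else 0) = N i}

/-- The flow entropy `H(f)`. -/
noncomputable def flowEntropy (n : ℕ) (N : Fin (n + 1) → ℝ)
    (f : Fin (n + 1) → Fin (n + 1) → ℝ) : ℝ :=
  (∑ i : Fin (n + 1), ∑ j : Fin (n + 1), if i < j then entH (f i j) else 0) +
  ∑ j : Fin (n + 1), if 0 < (j : ℕ) ∧ (j : ℕ) < n then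
    entH (∑ i : Fin (n + 1), if i < j then (N i - f i j) else 0) else 0

/-- Partial sums `s_k = N_0 + ⋯ + N_k`. -/
def sPartial (n : ℕ) (N : Fin (n + 1) → ℤ) (k : ℕ) : ℤ :=
  ∑ j : Fin (n + 1), if (j : ℕ) ≤ k then N j else 0

/-- Extend `(N_0,…,N_{n−1})` to the netflow vector `(N_0,…,N_{n−1},−∑ N_i)`. -/
def extend (n : ℕ) (N : Fin n → ℤ) : Fin (n + 1) → ℤ := Fin.snoc N (-∑ i, N i)



lemma entH_nonneg {t : ℝ} (ht : 0 ≤ t) : 0 ≤ entH t := by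
  unfold entH
  rcases ht.eq_or_lt with rfl | ht'
  · simp
  · have h1 : Real.log t ≤ Real.log (t + 1) := Real.log_le_log ht' (by linarith)
    have h2 : 0 ≤ Real.log (t + 1) := Real.log_nonneg (by linarith)
    nlinarith

/-- Tangent line (Gibbs) bound. -/
lemma entH_tangent {t μ : ℝ} (ht : 0 ≤ t) (hμ : 0 < μ) :
    entH t ≤ Real.log (1 + μ) + t * (Real.log (1 + μ) - Real.log μ) := by
  unfold entH
  have key : ∀ x y : ℝ, 0 < x → 0 < y → Real.log y - Real.log x ≤ (y - x) / x := by
    intro x y hx hy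
    have := Real.log_le_sub_one_of_pos (div_pos hy hx)
    rw [Real.log_div hy.ne' hx.ne'] at this
    have h2 : (y - x) / x = y / x - 1 := by field_simp
    linarith
  rcases ht.eq_or_lt with rfl | ht'
  · simp
    exact Real.log_nonneg (by linarith)
  · -- (t+1) (log (t+1) - log (1+μ)) ≤ t (log t - log μ)
    have hc : 0 < t * (1 + μ) / (t + 1) := by positivity
    have h1 := key t (μ * (t + 1) / (1 + μ)) ht' (by positivity)
    have h2 : Real.log (μ * (t + 1) / (1 + μ)) = Real.log μ + Real.log (t + 1) - Real.log (1 + μ) := by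
      rw [Real.log_div (by positivity) (by positivity), Real.log_mul (by positivity) (by positivity)]
    rw [h2] at h1
    have h3 := key (t + 1) (1 + μ) (by positivity) (by positivity)
    have h1' : t * (Real.log μ + Real.log (t + 1) - Real.log (1 + μ) - Real.log t)
        ≤ μ * (t + 1) / (1 + μ) - t := by
      have := mul_le_mul_of_nonneg_left h1 ht'.le
      rwa [mul_div_cancel₀ _ ht'.ne'] at this
    have h4 := key (1 + μ) (t + 1) (by positivity) (by positivity)
    have h5 : μ * (t + 1) / (1 + μ) - t + (t + 1 - (1 + μ)) / (1 + μ) = 0 := by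
      field_simp; ring
    linarith

lemma entH_le {t w : ℝ} (ht : 0 ≤ t) (htw : t ≤ w) : entH t ≤ Real.log (w + 1) + 1 := by
  rcases ht.eq_or_lt with rfl | ht'
  · simp [entH]
    have := Real.log_nonneg (show (1 : ℝ) ≤ w + 1 by linarith)
    linarith
  · have h1 := Real.log_le_log (show 0 < t + 1 by linarith) (show t + 1 ≤ w + 1 by linarith)
    have h2 := Real.log_le_sub_one_of_pos (show 0 < (t + 1) / t by positivity)
    rw [Real.log_div (by positivity) (by positivity)] at h2
    have h3 := mul_le_mul_of_nonneg_left h2 ht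
    have h4 : t * ((t + 1) / t - 1) = 1 := by field_simp; ring
    unfold entH
    linarith

lemma log_fact_bounds (n : ℕ) :
    (n : ℝ) * Real.log n - n ≤ Real.log (n.factorial) ∧
    (1 ≤ n → Real.log (n.factorial) ≤ n * Real.log n - n + 1 + Real.log n) := by
  induction n with
  | zero => simp
  | succ k ih =>
    rcases Nat.eq_zero_or_pos k with rfl | hk
    · simp
    have hk' : (0 : ℝ) < k := by exact_mod_cast hk
    have hf : Real.log ((k + 1).factorial) = Real.log (k + 1) + Real.log (k.factorial) := by
      rw [Nat.factorial_succ, Nat.cast_mul, Real.log_mul (by positivity) (by positivity)]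
      push_cast; rfl
    have h1 := Real.log_le_sub_one_of_pos (show (0 : ℝ) < (k + 1) / k by positivity)
    rw [Real.log_div (by positivity) (by positivity)] at h1
    have h2 := Real.log_le_sub_one_of_pos (show (0 : ℝ) < k / (k + 1) by positivity)
    rw [Real.log_div (by positivity) (by positivity)] at h2
    have h3 := mul_le_mul_of_nonneg_left h1 hk'.le
    have h4 := mul_le_mul_of_nonneg_left h2 (show (0 : ℝ) ≤ k + 1 by positivity)
    have e3 : (k : ℝ) * ((k + 1) / k - 1) = 1 := by field_simp; ring
    have e4 : ((k : ℝ) + 1) * (k / (k + 1) - 1) = -1 := by field_simp; ring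
    rw [hf]
    push_cast
    obtain ⟨ih1, ih2⟩ := ih
    have ih2 := ih2 hk
    refine ⟨by linarith, fun _ => by linarith⟩

/-- Box estimate. -/
lemma box_estimate {ι : Type*} (s : Finset ι) (g : ι → ℝ) (q m w : ℕ) (hq : 1 ≤ q)
    (hs : s.card ≤ q) (hg : ∀ c ∈ s, 0 ≤ g c) (hM : ∑ c ∈ s, g c ≤ (m : ℝ) + 1)
    (hw : m + q + 1 ≤ w) :
    ∑ c ∈ s, entH (g c) ≤ Real.log ((q + m - 1).choose m : ℕ) + 6 * (Real.log w + 1) := by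
  have hq' : (0 : ℝ) < q := by exact_mod_cast hq
  set r : ℝ := (m : ℝ) + 1 with hr
  have hr0 : 0 < r := by positivity
  set μ : ℝ := r / q with hμ
  have hμ0 : 0 < μ := by positivity
  have hl1 : Real.log (1 + μ) = Real.log (q + r) - Real.log q := by
    rw [← Real.log_div (by positivity) (by positivity)]; congr 1; rw [hμ]; field_simp
  have hl2 : Real.log μ = Real.log r - Real.log q := by
    rw [hμ, Real.log_div (by positivity) (by positivity)]
  have hl3 : 0 ≤ Real.log (1 + μ) := Real.log_nonneg (by linarith)
  have hl4 : Real.log r ≤ Real.log (q + r) := Real.log_le_log hr0 (by linarith)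
  have step1 : ∑ c ∈ s, entH (g c) ≤ q * (Real.log (q + r) - Real.log q)
      + r * (Real.log (q + r) - Real.log r) := by
    calc ∑ c ∈ s, entH (g c)
        ≤ ∑ c ∈ s, (Real.log (1 + μ) + g c * (Real.log (1 + μ) - Real.log μ)) :=
          Finset.sum_le_sum fun c hc => entH_tangent (hg c hc) hμ0
      _ = s.card * Real.log (1 + μ) + (∑ c ∈ s, g c) * (Real.log (1 + μ) - Real.log μ) := by
          rw [Finset.sum_add_distrib, Finset.sum_mul]; simp
      _ ≤ q * Real.log (1 + μ) + r * (Real.log (1 + μ) - Real.log μ) := by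
          have a1 : (s.card : ℝ) ≤ q := by exact_mod_cast hs
          have a2 : 0 ≤ Real.log (1 + μ) - Real.log μ := by rw [hl1, hl2]; linarith
          gcongr
      _ = _ := by rw [hl1, hl2]; ring
  -- factorials
  obtain ⟨p, rfl⟩ : ∃ p, q = p + 1 := ⟨q - 1, by omega⟩
  have hch : Real.log (((p + 1 + m - 1).choose m : ℕ) : ℝ) =
      Real.log ((p + m).factorial) - Real.log (m.factorial) - Real.log (p.factorial) := by
    have h0 : p + 1 + m - 1 = p + m := by omega
    rw [h0]
    have := Nat.add_choose_mul_factorial_mul_factorial p m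
    have h2 : (((p + m).choose m : ℕ) : ℝ) * p.factorial * m.factorial = (p + m).factorial := by
      exact_mod_cast this
    have hc : (0 : ℝ) < ((p + m).choose m : ℕ) := by
      exact_mod_cast Nat.choose_pos (by omega)
    rw [← h2, Real.log_mul (by positivity) (by positivity), Real.log_mul (by positivity) (by positivity)]
    ring
  have fs : ∀ k : ℕ, Real.log ((k + 1).factorial) = Real.log (k + 1) + Real.log (k.factorial) := by
    intro k
    rw [Nat.factorial_succ, Nat.cast_mul, Real.log_mul (by positivity) (by positivity)]
    push_cast; rfl
  have b1 := (log_fact_bounds (p + m + 1 + 1)).1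
  have b2 := (log_fact_bounds (m + 1)).2 (by omega)
  have b3 := (log_fact_bounds (p + 1)).2 (by omega)
  rw [fs (p + m + 1), fs (p + m)] at b1
  rw [fs m] at b2
  rw [fs p] at b3
  have hw' : ((m : ℝ) + (p + 1) + 1) ≤ w := by exact_mod_cast hw
  have c0 : 0 ≤ Real.log w := Real.log_nonneg (by nlinarith)
  have c1 : Real.log (p + m + 1 + 1 : ℝ) ≤ Real.log w := Real.log_le_log (by positivity) (by linarith)
  have c2 : Real.log (p + m + 1 : ℝ) ≤ Real.log w := Real.log_le_log (by positivity) (by linarith)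
  have c3 : Real.log (m + 1 : ℝ) ≤ Real.log w := Real.log_le_log (by positivity) (by linarith)
  have c4 : Real.log (p + 1 : ℝ) ≤ Real.log w := Real.log_le_log (by positivity) (by linarith)
  have c5 : 0 ≤ Real.log (m + 1 : ℝ) := Real.log_nonneg (by linarith)
  have c6 : 0 ≤ Real.log (p + 1 : ℝ) := Real.log_nonneg (by linarith [hq'])
  rw [hch]
  have e : (((p + 1 : ℕ) : ℝ) + r) = p + m + 1 + 1 := by rw [hr]; push_cast; ring
  rw [e] at step1
  push_cast at *
  rw [hr] at step1
  linarith

lemma card_piAntidiag_univ (ι : Type*) [Fintype ι] [DecidableEq ι] (m : ℕ) :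
    (Finset.piAntidiag (Finset.univ : Finset ι) m).card = (Fintype.card ι + m - 1).choose m := by
  rw [← Finset.card_univ, ← Finset.card_finsuppAntidiag_nat_eq_choose]
  simp [Finset.finsuppAntidiag]


/-- Flux through the cut before vertex `k`. -/
def flux {R : Type*} [AddCommMonoid R] {n : ℕ} (f : Fin (n + 1) → Fin (n + 1) → R) (k : ℕ) : R :=
  ∑ i : Fin (n + 1), ∑ j : Fin (n + 1), if (i : ℕ) < k ∧ k ≤ (j : ℕ) then f i j else 0

lemma flux_succ {R : Type*} [CommRing R] {n : ℕ} (f : Fin (n + 1) → Fin (n + 1) → R)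
    (k : Fin (n + 1)) :
    flux f (k + 1) = flux f k + ((∑ j : Fin (n + 1), if k < j then f k j else 0) -
      (∑ i : Fin (n + 1), if i < k then f i k else 0)) := by
  have h1 : (∑ j : Fin (n + 1), if k < j then f k j else 0) =
      ∑ i : Fin (n + 1), ∑ j : Fin (n + 1), if i = k ∧ k < j then f i j else 0 := by
    symm
    rw [Finset.sum_eq_single k]
    · simp
    · intro b _ hb; simp [hb]
    · simp
  have h2 : (∑ i : Fin (n + 1), if i < k then f i k else 0) =
      ∑ i : Fin (n + 1), ∑ j : Fin (n + 1), if j = k ∧ i < k then f i j else 0 := by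
    refine Finset.sum_congr rfl fun i _ => ?_
    rw [Finset.sum_eq_single k]
    · simp
    · intro b _ hb; simp [hb]
    · simp
  rw [h1, h2]
  unfold flux
  rw [← Finset.sum_sub_distrib, ← Finset.sum_add_distrib]
  refine Finset.sum_congr rfl fun i _ => ?_
  rw [← Finset.sum_sub_distrib, ← Finset.sum_add_distrib]
  refine Finset.sum_congr rfl fun j _ => ?_
  simp only [Fin.ext_iff, Fin.lt_def]
  rcases lt_trichotomy (i : ℕ) k with h | h | h <;> rcases lt_trichotomy (j : ℕ) k with h' | h' | h'
  all_goals
    (split_ifs <;> first | omega | simp)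

lemma flux_zero {R : Type*} [AddCommMonoid R] {n : ℕ} (f : Fin (n + 1) → Fin (n + 1) → R) :
    flux f 0 = 0 := by simp [flux]

lemma flux_top {R : Type*} [AddCommMonoid R] {n : ℕ} (f : Fin (n + 1) → Fin (n + 1) → R) :
    flux f (n + 1) = 0 := by
  unfold flux
  refine Finset.sum_eq_zero fun i _ => Finset.sum_eq_zero fun j _ => ?_
  rw [if_neg]; have := j.2; omega

/-- Partial sums of the netflow -/
def pre {R : Type*} [AddCommMonoid R] {n : ℕ} (N : Fin (n + 1) → R) (k : ℕ) : R :=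
  ∑ i : Fin (n + 1), if (i : ℕ) < k then N i else 0

lemma pre_succ {R : Type*} [AddCommMonoid R] {n : ℕ} (N : Fin (n + 1) → R) (k : Fin (n + 1)) :
    pre N (k + 1) = pre N k + N k := by
  unfold pre
  have : N k = ∑ i : Fin (n + 1), if i = k then N i else 0 := by simp
  rw [this, ← Finset.sum_add_distrib]
  refine Finset.sum_congr rfl fun i _ => ?_
  simp only [Fin.ext_iff]
  split_ifs <;> first | omega | simp

lemma flux_eq_pre {R : Type*} [CommRing R] {n : ℕ} (f : Fin (n + 1) → Fin (n + 1) → R)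
    (N : Fin (n + 1) → R)
    (h : ∀ i : Fin (n + 1),
      (∑ j : Fin (n + 1), if i < j then f i j else 0) -
        (∑ k : Fin (n + 1), if k < i then f k i else 0) = N i) (k : ℕ) (hk : k ≤ n + 1) :
    flux f k = pre N k := by
  induction k with
  | zero => simp [flux_zero, pre]
  | succ k ih =>
    have h1 := flux_succ f ⟨k, by omega⟩
    have h2 := pre_succ N ⟨k, by omega⟩
    simp only at h1 h2
    rw [h1, h2, ih (by omega), h]

lemma pre_extend (n : ℕ) (N : ℕ → ℕ) (k : ℕ) (hk : k ≤ n) :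
    pre (extend n fun k : Fin n => (N k : ℤ)) k = ((∑ i ∈ range k, N i : ℕ) : ℤ) := by
  induction k with
  | zero => simp [pre]
  | succ k ih =>
    have h2 := pre_succ (extend n fun k : Fin n => (N k : ℤ)) ⟨k, by omega⟩
    simp only at h2
    rw [h2, ih (by omega), Finset.sum_range_succ]
    have : (⟨k, by omega⟩ : Fin (n + 1)) = Fin.castSucc ⟨k, by omega⟩ := rfl
    rw [this, extend, Fin.snoc_castSucc]
    simp

lemma pre_extend_top (n : ℕ) (N : ℕ → ℕ)  :
    pre (extend n fun k : Fin n => (N k : ℤ)) (n + 1) = 0 := by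
  have h2 := pre_succ (extend n fun k : Fin n => (N k : ℤ)) (Fin.last n)
  simp only [Fin.val_last] at h2
  rw [h2, pre_extend n N n le_rfl, extend, Fin.snoc_last, Finset.sum_range]
  simp

lemma pre_cast {n : ℕ} (M : Fin (n + 1) → ℤ) (k : ℕ) :
    pre (fun i => (M i : ℝ)) k = ((pre M k : ℤ) : ℝ) := by
  unfold pre; push_cast; rfl

lemma le_flux {n : ℕ} (f : Fin (n + 1) → Fin (n + 1) → ℝ) (hf : ∀ i j, 0 ≤ f i j)
    {i j : Fin (n + 1)} (k : ℕ) (h1 : (i : ℕ) < k) (h2 : k ≤ (j : ℕ)) : f i j ≤ flux f k := by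
  have hn : ∀ i' j' : Fin (n + 1), 0 ≤ (if (i' : ℕ) < k ∧ k ≤ (j' : ℕ) then f i' j' else 0) := by
    intro i' j'; split_ifs
    · exact hf _ _
    · exact le_rfl
  calc f i j = if (i : ℕ) < k ∧ k ≤ (j : ℕ) then f i j else 0 := by rw [if_pos ⟨h1, h2⟩]
    _ ≤ ∑ j' : Fin (n + 1), if (i : ℕ) < k ∧ k ≤ (j' : ℕ) then f i j' else 0 :=
        Finset.single_le_sum (f := fun j' : Fin (n + 1) => if (i : ℕ) < k ∧ k ≤ (j' : ℕ) then f i j' else 0)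
          (fun j' _ => hn i j') (Finset.mem_univ j)
    _ ≤ flux f k :=
        Finset.single_le_sum (f := fun i' : Fin (n + 1) => ∑ j' : Fin (n + 1), if (i' : ℕ) < k ∧ k ≤ (j' : ℕ) then f i' j' else 0)
          (fun i' _ => Finset.sum_nonneg fun j' _ => hn i' j') (Finset.mem_univ i)

lemma flux_cast_int {n : ℕ} (x : Fin (n + 1) → Fin (n + 1) → ℕ) (k : ℕ) :
    flux (fun i j => (x i j : ℤ)) k = ((flux x k : ℕ) : ℤ) := by
  unfold flux; push_cast; rfl

lemma flux_cast_real {n : ℕ} (x : Fin (n + 1) → Fin (n + 1) → ℕ) (k : ℕ) :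
    flux (fun i j => (x i j : ℝ)) k = ((flux x k : ℕ) : ℝ) := by
  unfold flux; push_cast; rfl

lemma pre_real (n : ℕ) (N : ℕ → ℕ) (k : ℕ) (hk : k ≤ n) :
    pre (fun i => ((extend n fun k : Fin n => (N k : ℤ)) i : ℝ)) k = ((∑ i ∈ range k, N i : ℕ) : ℝ) := by
  rw [pre_cast, pre_extend n N k hk]; simp

lemma polytope_nonneg {n : ℕ} {N : Fin (n + 1) → ℝ} {f} (hf : f ∈ FlowPolytope n N) (i j) :
    0 ≤ f i j := by
  by_cases h : i < j
  · exact hf.1 i j h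
  · rw [hf.2.1 i j h]

lemma polytope_flux {n : ℕ} {N : ℕ → ℕ} {f}
    (hf : f ∈ FlowPolytope n fun i => ((extend n fun k : Fin n => (N k : ℤ)) i : ℝ)) (k : ℕ)
    (hk : k ≤ n) : flux f k = ((∑ i ∈ range k, N i : ℕ) : ℝ) := by
  rw [flux_eq_pre f _ hf.2.2 k (by omega), pre_real n N k hk]

lemma intFlow_mem_polytope {n : ℕ} {M : Fin (n + 1) → ℤ} {x : Fin (n + 1) → Fin (n + 1) → ℕ}
    (hx : IsIntFlow n M x) : (fun i j => (x i j : ℝ)) ∈ FlowPolytope n fun i => (M i : ℝ) := by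
  refine ⟨fun i j _ => by positivity, fun i j h => by simp [hx.1 i j h], fun i => ?_⟩
  show _ = ((M i : ℤ) : ℝ)
  rw [← hx.2 i]
  push_cast
  rfl

lemma polytope_le {n : ℕ} {N : ℕ → ℕ} {f}
    (hf : f ∈ FlowPolytope n fun i => ((extend n fun k : Fin n => (N k : ℤ)) i : ℝ)) (i j) :
    f i j ≤ ((∑ i ∈ range n, N i : ℕ) : ℝ) := by
  by_cases h : i < j
  · refine (le_flux f (polytope_nonneg hf) (j : ℕ) h le_rfl).trans ?_
    have hj : (j : ℕ) ≤ n := by omega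
    rw [polytope_flux hf j hj]
    exact_mod_cast Finset.sum_le_sum_of_subset (Finset.range_mono hj)
  · rw [hf.2.1 i j h]; positivity

lemma intFlow_le {n : ℕ} {N : ℕ → ℕ} {x}
    (hx : IsIntFlow n (extend n fun k : Fin n => (N k : ℤ)) x) (i j) :
    x i j ≤ ∑ i ∈ range n, N i := by
  have := polytope_le (intFlow_mem_polytope hx) i j
  exact_mod_cast this

instance intFlow_finite (n : ℕ) (N : ℕ → ℕ) :
    Finite {f : Fin (n + 1) → Fin (n + 1) → ℕ // IsIntFlow n (extend n fun k : Fin n => (N k : ℤ)) f} := by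
  set W := ∑ i ∈ range n, N i
  refine Finite.of_injective
    (β := Fin (n + 1) → Fin (n + 1) → Fin (W + 1))
    (fun f i j => ⟨f.1 i j, Nat.lt_succ_of_le (intFlow_le f.2 i j)⟩) ?_
  intro f g h
  ext i j
  have := congrFun (congrFun h i) j
  simpa using this

/-- Completion of a free table by nearest-neighbour edges. -/
def completion {n : ℕ} (N : ℕ → ℕ) (x : Fin (n + 1) → Fin (n + 1) → ℕ) :
    Fin (n + 1) → Fin (n + 1) → ℕ :=
  fun i j => if (i : ℕ) + 1 = j then (∑ l ∈ range j, N l) - flux x j else x i j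

lemma completion_flow {n : ℕ} (N : ℕ → ℕ) (x : Fin (n + 1) → Fin (n + 1) → ℕ)
    (h0 : ∀ i j : Fin (n + 1), (j : ℕ) < i + 2 → x i j = 0)
    (hx : ∀ k ≤ n, flux x k ≤ ∑ l ∈ range k, N l) :
    IsIntFlow n (extend n fun k : Fin n => (N k : ℤ)) (completion N x) := by
  set M := extend n fun k : Fin n => (N k : ℤ) with hM
  refine ⟨fun i j hij => ?_, fun i => ?_⟩
  · have : ¬ ((i : ℕ) + 1 = j) := by rw [Fin.lt_def] at hij; omega
    simp only [completion, if_neg this]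
    apply h0; rw [Fin.lt_def] at hij; omega
  · set c : ℕ → ℤ := fun k => pre M k - flux (fun i j => (x i j : ℤ)) k with hc
    have hc0 : c 0 = 0 := by simp [hc, flux_zero, pre]
    have hcn : c (n + 1) = 0 := by
      simp only [hc]; rw [flux_top, hM, pre_extend_top]; simp
    have hcomp : ∀ i j : Fin (n + 1), (completion N x i j : ℤ) =
        (x i j : ℤ) + if (i : ℕ) + 1 = j then c j else 0 := by
      intro i j
      simp only [completion]
      split_ifs with h
      · have hj : (j : ℕ) ≤ n := by omega
        rw [h0 i j (by omega)]
        simp only [hc, flux_cast_int]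
        rw [hM, pre_extend n N j hj, Nat.cast_sub (hx _ hj)]
        simp
      · simp
    have h1 : (∑ j : Fin (n + 1), if i < j then (completion N x i j : ℤ) else 0) =
        (∑ j : Fin (n + 1), if i < j then (x i j : ℤ) else 0) + c (i + 1) := by
      have : c (i + 1) = ∑ j : Fin (n + 1), if (i : ℕ) + 1 = j then c j else 0 := by
        by_cases hi : (i : ℕ) + 1 < n + 1
        · rw [Finset.sum_eq_single ⟨i + 1, hi⟩]
          · simp
          · intro b _ hb; rw [if_neg]; intro h; apply hb; ext; simp [h]
          · simp
        · have : (i : ℕ) = n := by omega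
          rw [this, hcn, Finset.sum_eq_zero]
          intro j _; rw [if_neg]; omega
      rw [this, ← Finset.sum_add_distrib]
      refine Finset.sum_congr rfl fun j _ => ?_
      rw [hcomp]
      simp only [Fin.lt_def]
      split_ifs <;> first | omega | simp
    have h2 : (∑ k : Fin (n + 1), if k < i then (completion N x k i : ℤ) else 0) =
        (∑ k : Fin (n + 1), if k < i then (x k i : ℤ) else 0) + c i := by
      have : c i = ∑ k : Fin (n + 1), if (k : ℕ) + 1 = i then c i else 0 := by
        by_cases hi : (i : ℕ) = 0
        · rw [hi, hc0, Finset.sum_eq_zero]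
          intro j _; rw [if_neg]; omega
        · rw [Finset.sum_eq_single ⟨i - 1, by omega⟩]
          · rw [if_pos]; simp; omega
          · intro b _ hb; rw [if_neg]; intro h; apply hb; ext; simp; omega
          · simp
      rw [this, ← Finset.sum_add_distrib]
      refine Finset.sum_congr rfl fun k _ => ?_
      rw [hcomp]
      simp only [Fin.lt_def]
      split_ifs <;> first | omega | simp
    rw [h1, h2]
    have e1 := flux_succ (fun i j => (x i j : ℤ)) i
    have e2 := pre_succ M i
    simp only [hc]
    rw [e2]
    linarith

lemma completion_inj {n : ℕ} (N : ℕ → ℕ) (x y : Fin (n + 1) → Fin (n + 1) → ℕ)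
    (h0 : ∀ i j : Fin (n + 1), (j : ℕ) < i + 2 → x i j = 0)
    (h0' : ∀ i j : Fin (n + 1), (j : ℕ) < i + 2 → y i j = 0)
    (h : completion N x = completion N y) : x = y := by
  ext i j
  by_cases hij : (i : ℕ) + 1 = j
  · rw [h0 i j (by omega), h0' i j (by omega)]
  · have := congrFun (congrFun h i) j
    simpa only [completion, if_neg hij] using this

lemma card_le_Kn {n : ℕ} (N : ℕ → ℕ) {τ : Type*} (T : Finset τ)
    (x : τ → Fin (n + 1) → Fin (n + 1) → ℕ) (hinj : Set.InjOn x T)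
    (h0 : ∀ t ∈ T, ∀ i j : Fin (n + 1), (j : ℕ) < i + 2 → x t i j = 0)
    (hx : ∀ t ∈ T, ∀ k ≤ n, flux (x t) k ≤ ∑ l ∈ range k, N l) :
    T.card ≤ Kn n (extend n fun k : Fin n => (N k : ℤ)) := by
  unfold Kn
  have hT : T.card = Nat.card T := by simp
  rw [hT]
  refine Nat.card_le_card_of_injective
    (fun t : T => ⟨completion N (x t.1), completion_flow N _ (h0 t.1 t.2) (hx t.1 t.2)⟩) ?_
  intro s t h
  have h' := congrArg Subtype.val h
  exact Subtype.ext (hinj s.2 t.2 (completion_inj N _ _ (h0 s.1 s.2) (h0 t.1 t.2) h'))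


lemma gibbs_bound {ι F : Type*} [Fintype ι] [DecidableEq ι] [Fintype F] [Nonempty F]
    (x : F → ι → ℕ) (hx : Function.Injective x) (m : ι → ℝ)
    (hm : ∀ p, m p = (∑ t, (x t p : ℝ)) / Fintype.card F) :
    Real.log (Fintype.card F) ≤ ∑ p, entH (m p) := by
  classical
  set K : ℝ := (Fintype.card F : ℝ) with hK
  have hK0 : 0 < K := by rw [hK]; exact_mod_cast Fintype.card_pos
  have hm0 : ∀ p, 0 ≤ m p := fun p => by rw [hm]; positivity
  set q : ι → ℕ → ℝ := fun p v => (1 / (1 + m p)) * (m p / (1 + m p)) ^ v with hq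
  have hq0 : ∀ p v, 0 ≤ q p v := fun p v => by have := hm0 p; simp only [hq]; positivity
  -- total mass at most one
  set W : ℕ := ∑ t, ∑ p, x t p with hW
  have hxW : ∀ t p, x t p ≤ W := by
    intro t p
    calc x t p ≤ ∑ p, x t p := Finset.single_le_sum (f := fun p => x t p) (by simp) (Finset.mem_univ p)
      _ ≤ W := Finset.single_le_sum (f := fun t => ∑ p, x t p) (by simp) (Finset.mem_univ t)
  have hmass : ∑ t, ∏ p, q p (x t p) ≤ 1 := by
    calc ∑ t, ∏ p, q p (x t p)
        = ∑ y ∈ (Finset.univ : Finset F).image x, ∏ p, q p (y p) := by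
          rw [Finset.sum_image (fun a _ b _ h => hx h)]
      _ ≤ ∑ y ∈ Fintype.piFinset (fun _ : ι => Finset.range (W + 1)), ∏ p, q p (y p) := by
          apply Finset.sum_le_sum_of_subset_of_nonneg
          · intro y hy
            obtain ⟨t, _, rfl⟩ := Finset.mem_image.1 hy
            rw [Fintype.mem_piFinset]
            intro p
            have := hxW t p
            simp; omega
          · intro y _ _
            exact Finset.prod_nonneg fun p _ => hq0 p _
      _ = ∏ p, ∑ v ∈ Finset.range (W + 1), q p v := by
          rw [Finset.prod_univ_sum]
      _ ≤ 1 := by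
          apply Finset.prod_le_one
          · intro p _; exact Finset.sum_nonneg fun v _ => hq0 p v
          · intro p _
            have h1 : 0 < 1 + m p := by have := hm0 p; positivity
            have h2 : 1 / (1 + m p) = 1 - m p / (1 + m p) := by field_simp; ring
            simp only [hq]
            rw [← Finset.mul_sum, h2, mul_neg_geom_sum]
            have : 0 ≤ (m p / (1 + m p)) ^ (W + 1) := by have := hm0 p; positivity
            linarith
  have hlog1 : ∀ t p, 0 < q p (x t p) ∧
      Real.log (q p (x t p)) = - Real.log (1 + m p) + x t p * (Real.log (m p) - Real.log (1 + m p)) := by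
    intro t p
    have h1 : 0 < 1 + m p := by have := hm0 p; positivity
    rcases (hm0 p).eq_or_lt with h | h
    · have hz : x t p = 0 := by
        have := hm p
        rw [← h] at this
        have h3 : ∑ t, (x t p : ℝ) = 0 := by
          rcases div_eq_zero_iff.1 this.symm with h | h
          · exact h
          · exact absurd h hK0.ne'
        have := (Finset.sum_eq_zero_iff_of_nonneg (fun t _ => by positivity)).1 h3 t (Finset.mem_univ t)
        exact_mod_cast this
      simp [hq, hz, ← h]
    · refine ⟨by simp only [hq]; positivity, ?_⟩
      simp only [hq]
      rw [Real.log_mul (by positivity) (by positivity), Real.log_pow,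
        Real.log_div (by positivity) (by positivity), Real.log_div (by positivity) (by positivity)]
      simp
  have hsum : ∑ t, Real.log (∏ p, q p (x t p)) = - (K * ∑ p, entH (m p)) := by
    have : ∀ t, Real.log (∏ p, q p (x t p)) =
        ∑ p, (- Real.log (1 + m p) + x t p * (Real.log (m p) - Real.log (1 + m p))) := by
      intro t
      rw [Real.log_prod (fun p _ => (hlog1 t p).1.ne')]
      exact Finset.sum_congr rfl fun p _ => (hlog1 t p).2
    rw [Finset.sum_congr rfl fun t _ => this t, Finset.sum_comm, Finset.mul_sum, ← Finset.sum_neg_distrib]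
    refine Finset.sum_congr rfl fun p _ => ?_
    rw [Finset.sum_add_distrib, ← Finset.sum_mul]
    have h4 : ∑ t, (x t p : ℝ) = K * m p := by rw [hm]; field_simp
    rw [h4]
    simp only [Finset.sum_const, Finset.card_univ, nsmul_eq_mul, ← hK]
    unfold entH
    rw [add_comm 1 (m p)]
    ring
  have hfin : ∑ t, (Real.log (∏ p, q p (x t p)) + Real.log K) ≤ ∑ t, ((∏ p, q p (x t p)) * K - 1) := by
    refine Finset.sum_le_sum fun t _ => ?_
    have hp : 0 < ∏ p, q p (x t p) := Finset.prod_pos fun p _ => (hlog1 t p).1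
    rw [← Real.log_mul hp.ne' hK0.ne']
    exact Real.log_le_sub_one_of_pos (by positivity)
  rw [Finset.sum_add_distrib, hsum, Finset.sum_sub_distrib, ← Finset.sum_mul] at hfin
  simp only [Finset.sum_const, Finset.card_univ, nsmul_eq_mul, ← hK, mul_one] at hfin
  have h5 : (∑ t, ∏ p, q p (x t p)) * K ≤ K := by nlinarith
  have h6 : K * Real.log K ≤ K * ∑ p, entH (m p) := by linarith
  exact le_of_mul_le_mul_left h6 hK0

lemma entropy_ge {n : ℕ} {N : ℕ → ℕ} {f}
    (hf : f ∈ FlowPolytope n fun i => ((extend n fun k : Fin n => (N k : ℤ)) i : ℝ)) (j : Fin (n + 1))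
    (hj : (j : ℕ) < n) :
    0 ≤ (∑ i : Fin (n + 1), if i < j then
      (((extend n fun k : Fin n => (N k : ℤ)) i : ℝ) - f i j) else 0) ∧
    (∑ i : Fin (n + 1), if i < j then
      (((extend n fun k : Fin n => (N k : ℤ)) i : ℝ) - f i j) else 0) ≤ ((∑ i ∈ range n, N i : ℕ) : ℝ) := by
  have h0 := polytope_nonneg hf
  have e : (∑ i : Fin (n + 1), if i < j then
      (((extend n fun k : Fin n => (N k : ℤ)) i : ℝ) - f i j) else 0) =
      ((∑ i ∈ range j, N i : ℕ) : ℝ) - ∑ i : Fin (n + 1), if i < j then f i j else 0 := by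
    rw [← pre_real n N j hj.le]
    unfold pre
    rw [← Finset.sum_sub_distrib]
    refine Finset.sum_congr rfl fun i _ => ?_
    simp only [Fin.lt_def]
    split_ifs <;> simp
  have h1 : 0 ≤ ∑ i : Fin (n + 1), if i < j then f i j else 0 :=
    Finset.sum_nonneg fun i _ => by split_ifs; exacts [h0 i j, le_rfl]
  have h2 : (∑ i : Fin (n + 1), if i < j then f i j else 0) ≤ flux f j := by
    unfold flux
    refine Finset.sum_le_sum fun i _ => ?_
    have hnn : ∀ j' ∈ (Finset.univ : Finset (Fin (n + 1))),
        0 ≤ (if (i : ℕ) < j ∧ (j : ℕ) ≤ (j' : ℕ) then f i j' else 0) := by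
      intro j' _; split_ifs; exacts [h0 i j', le_rfl]
    have := Finset.single_le_sum hnn (Finset.mem_univ j)
    refine le_trans (le_of_eq ?_) this
    simp
  rw [polytope_flux hf j hj.le] at h2
  have h3 : ((∑ i ∈ range j, N i : ℕ) : ℝ) ≤ ((∑ i ∈ range n, N i : ℕ) : ℝ) := by
    exact_mod_cast Finset.sum_le_sum_of_subset (Finset.range_mono hj.le)
  rw [e]
  constructor <;> linarith

lemma upper_bound (n : ℕ) (N : ℕ → ℕ) (hK : 0 < Kn n (extend n fun k : Fin n => (N k : ℤ))) :
    ∃ f ∈ FlowPolytope n fun i => ((extend n fun k : Fin n => (N k : ℤ)) i : ℝ),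
      Real.log (Kn n (extend n fun k : Fin n => (N k : ℤ))) ≤
        flowEntropy n (fun i => ((extend n fun k : Fin n => (N k : ℤ)) i : ℝ)) f := by
  set M := extend n fun k : Fin n => (N k : ℤ) with hM
  unfold Kn at *
  set F := {f : Fin (n + 1) → Fin (n + 1) → ℕ // IsIntFlow n M f} with hF
  haveI : Finite F := intFlow_finite n N
  haveI : Fintype F := Fintype.ofFinite F
  rw [Nat.card_eq_fintype_card] at *
  haveI : Nonempty F := Fintype.card_pos_iff.1 hK
  have hK0 : (0 : ℝ) < Fintype.card F := by exact_mod_cast hK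
  set m : Fin (n + 1) → Fin (n + 1) → ℝ := fun i j => (∑ t : F, (t.1 i j : ℝ)) / Fintype.card F with hm
  have hz : ∀ i j : Fin (n + 1), ¬ i < j → m i j = 0 := by
    intro i j hij
    simp only [hm]
    rw [Finset.sum_eq_zero, zero_div]
    intro t _
    rw [t.2.1 i j hij]; simp
  have hmem : m ∈ FlowPolytope n fun i => (M i : ℝ) := by
    refine ⟨fun i j _ => by simp only [hm]; positivity, hz, fun i => ?_⟩
    have h1 : ∀ t : F, (∑ j : Fin (n + 1), if i < j then (t.1 i j : ℝ) else 0) -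
        (∑ k : Fin (n + 1), if k < i then (t.1 k i : ℝ) else 0) = (M i : ℝ) := fun t =>
      (intFlow_mem_polytope t.2).2.2 i
    have h2 : (∑ j : Fin (n + 1), if i < j then m i j else 0) =
        (∑ t : F, ∑ j : Fin (n + 1), if i < j then (t.1 i j : ℝ) else 0) / Fintype.card F := by
      rw [Finset.sum_comm, Finset.sum_div]
      refine Finset.sum_congr rfl fun j _ => ?_
      split_ifs <;> simp [hm]
    have h3 : (∑ k : Fin (n + 1), if k < i then m k i else 0) =
        (∑ t : F, ∑ k : Fin (n + 1), if k < i then (t.1 k i : ℝ) else 0) / Fintype.card F := by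
      rw [Finset.sum_comm, Finset.sum_div]
      refine Finset.sum_congr rfl fun j _ => ?_
      split_ifs <;> simp [hm]
    rw [h2, h3, ← sub_div, ← Finset.sum_sub_distrib, Finset.sum_congr rfl fun t _ => h1 t]
    simp
  refine ⟨m, hmem, ?_⟩
  have hg := gibbs_bound (F := F) (ι := Fin (n + 1) × Fin (n + 1)) (fun t p => t.1 p.1 p.2)
    (by
      intro s t h
      ext i j
      exact congrFun h (i, j)) (fun p => m p.1 p.2) (fun p => rfl)
  refine hg.trans ?_
  unfold flowEntropy
  rw [Fintype.sum_prod_type]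
  have e1 : ∑ i, ∑ j, entH (m i j) = ∑ i, ∑ j, if i < j then entH (m i j) else 0 := by
    refine Finset.sum_congr rfl fun i _ => Finset.sum_congr rfl fun j _ => ?_
    split_ifs with h
    · rfl
    · rw [hz i j h]; simp [entH]
  simp only
  rw [e1]
  refine le_add_of_nonneg_right (Finset.sum_nonneg fun j _ => ?_)
  split_ifs with h
  · exact entH_nonneg (entropy_ge hmem j h.2).1
  · exact le_rfl

lemma Kn_lower (n d u : ℕ) (N : ℕ → ℕ) (hpos : ∀ k, 0 < N k) (hu : (d + 1) ^ 2 + u + d + 1 ≤ n) :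
    2 ^ (u * d) ≤ Kn n (extend n fun k : Fin n => (N k : ℤ)) := by
  classical
  set P : Finset (Fin (n + 1) × Fin (n + 1)) :=
    Finset.univ.filter fun p => (d + 1) ^ 2 ≤ (p.1 : ℕ) ∧ (p.1 : ℕ) + 2 ≤ p.2 ∧ (p.2 : ℕ) ≤ p.1 + 1 + d
    with hP
  have hcard : u * d ≤ P.card := by
    have : u * d = (Finset.univ : Finset (Fin u × Fin d)).card := by simp
    rw [this]
    refine Finset.card_le_card_of_injOn
      (fun c => (⟨(d + 1) ^ 2 + c.1, by omega⟩, ⟨(d + 1) ^ 2 + c.1 + 2 + c.2, by omega⟩)) ?_ ?_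
    · intro c _
      simp [hP]
      omega
    · intro c _ c' _ h
      simp only [Prod.mk.injEq, Fin.mk.injEq] at h
      ext <;> omega
  have h2 : (P.powerset).card ≤ Kn n (extend n fun k : Fin n => (N k : ℤ)) := by
    refine card_le_Kn N P.powerset (fun s i j => if (i, j) ∈ s then 1 else 0) ?_ ?_ ?_
    · intro s _ t _ h
      ext ⟨i, j⟩
      have := congrFun (congrFun h i) j
      simp only at this
      split_ifs at this <;> simp_all
    · intro s hs i j hij
      rw [if_neg]
      intro hmem
      have := Finset.mem_powerset.1 hs hmem
      simp [hP] at this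
      omega
    · intro s hs k hk
      have hs' := Finset.mem_powerset.1 hs
      set Q := s.filter fun p => (p.1 : ℕ) < k ∧ k ≤ (p.2 : ℕ) with hQ
      have e1 : flux (fun i j => if (i, j) ∈ s then 1 else 0) k = Q.card := by
        unfold flux
        rw [← Fintype.sum_prod_type' (f := fun (i j : Fin (n + 1)) => if (i : ℕ) < k ∧ k ≤ (j : ℕ) then
          (if (i, j) ∈ s then 1 else 0) else 0)]
        have : Q.card = ∑ p : Fin (n + 1) × Fin (n + 1), if p ∈ Q then 1 else 0 := by simp
        rw [this]
        refine Finset.sum_congr rfl fun p _ => ?_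
        by_cases h1 : p ∈ s <;> simp [hQ, h1]
      rw [e1]
      rcases Q.eq_empty_or_nonempty with h | ⟨p, hp⟩
      · simp [h]
      · have hle : Q.card ≤ (d + 1) ^ 2 := by
          have : ((Finset.Ico (k - (d + 1)) k) ×ˢ (Finset.Icc k (k + d))).card ≤ (d + 1) ^ 2 := by
            rw [Finset.card_product, Nat.card_Ico, Nat.card_Icc, sq]
            gcongr <;> omega
          refine le_trans ?_ this
          refine Finset.card_le_card_of_injOn (fun p => ((p.1 : ℕ), (p.2 : ℕ))) ?_ ?_
          · intro p hp
            have hp' := (Finset.mem_filter.1 hp)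
            have := hs' hp'.1
            simp [hP] at this
            have := hp'.2
            simp
            omega
          · intro p _ p' _ h
            simp only [Prod.mk.injEq] at h
            ext <;> omega
        have hp' := (Finset.mem_filter.1 hp)
        have h3 := hs' hp'.1
        simp [hP] at h3
        have h4 : k ≤ ∑ l ∈ range k, N l := by
          calc k = ∑ l ∈ range k, 1 := by simp
            _ ≤ _ := Finset.sum_le_sum fun l _ => hpos l
        omega
  rw [Finset.card_powerset] at h2
  exact (Nat.pow_le_pow_right (by norm_num) hcard).trans h2


lemma lt_of_div_lt' {a b B : ℕ} (h : a / B < b / B) : a < b := by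
  by_contra hc
  exact absurd (Nat.div_le_div_right (c := B) (not_lt.1 hc)) (by omega)

lemma add_two_le_of_div {i j B : ℕ} (hB : 1 ≤ B) (h : i / B + 2 ≤ j / B) : i + 2 ≤ j := by
  have h1 : (i + 1) / B ≤ i / B + 1 := by
    rw [← Nat.add_div_right i (by omega : 0 < B)]
    exact Nat.div_le_div_right (by omega)
  have := lt_of_div_lt' (a := i + 1) (b := j) (B := B) (by omega)
  omega

lemma eq_of_div_mod {a b B : ℕ} (h1 : a / B = b / B) (h2 : a % B = b % B) : a = b := by
  rw [← Nat.div_add_mod a B, ← Nat.div_add_mod b B, h1, h2]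

/-- block of an edge -/
def blk (n B : ℕ) (c : Fin (n + 1) × Fin (n + 1)) : Fin (n + 2) × Fin (n + 2) :=
  (⟨c.1 / B, by have := Nat.div_le_self c.1 B; omega⟩, ⟨c.2 / B, by have := Nat.div_le_self c.2 B; omega⟩)

/-- outward shifted block of an edge -/
def sblk (n B : ℕ) (c : Fin (n + 1) × Fin (n + 1)) : Fin (n + 2) × Fin (n + 2) :=
  (⟨c.1 / B - 1, by have := Nat.div_le_self c.1 B; omega⟩,
    ⟨c.2 / B + 1, by have := Nat.div_le_self c.2 B; omega⟩)

/-- block pairs which are far apart -/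
def goodBlk (n B : ℕ) (p : Fin (n + 2) × Fin (n + 2)) : Prop := (p.1 : ℕ) + 4 ≤ p.2 ∧ (p.2 : ℕ) ≤ n / B

open Classical in
/-- total mass of a block -/
noncomputable def boxMass (n B : ℕ) (f : Fin (n + 1) → Fin (n + 1) → ℝ)
    (p : Fin (n + 2) × Fin (n + 2)) : ℝ :=
  ∑ c ∈ Finset.univ.filter (fun c => blk n B c = p), f c.1 c.2

open Classical in
/-- number of particles placed in a block -/
noncomputable def boxNum (n B : ℕ) (f : Fin (n + 1) → Fin (n + 1) → ℝ)
    (p : Fin (n + 2) × Fin (n + 2)) : ℕ :=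
  if goodBlk n B p then ⌊boxMass n B f p⌋₊ else 0

open Classical in
/-- the table determined by a placement of particles -/
noncomputable def boxTable (n B : ℕ) (hB : 1 ≤ B)
    (t : Fin (n + 2) × Fin (n + 2) → Fin B × Fin B → ℕ) (i j : Fin (n + 1)) : ℕ :=
  if 1 ≤ (i : ℕ) / B ∧ (i : ℕ) / B + 2 ≤ (j : ℕ) / B ∧ (j : ℕ) / B + 1 ≤ n / B then
    t (sblk n B (i, j)) (⟨i % B, Nat.mod_lt _ hB⟩, ⟨j % B, Nat.mod_lt _ hB⟩) else 0

lemma boxTable_flux (n B : ℕ) (hB : 1 ≤ B) (f : Fin (n + 1) → Fin (n + 1) → ℝ)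
    (hf : ∀ i j, 0 ≤ f i j) (t : Fin (n + 2) × Fin (n + 2) → Fin B × Fin B → ℕ)
    (ht : ∀ p, ∑ c, t p c = boxNum n B f p) (k : ℕ) :
    ((flux (boxTable n B hB t) k : ℕ) : ℝ) ≤ flux f k := by
  classical
  have e1 : flux (boxTable n B hB t) k = ∑ p, ∑ c ∈ Finset.univ.filter (fun c => sblk n B c = p),
      if (c.1 : ℕ) < k ∧ k ≤ (c.2 : ℕ) then boxTable n B hB t c.1 c.2 else 0 := by
    rw [Finset.sum_fiberwise, Fintype.sum_prod_type]; rfl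
  have e2 : flux f k = ∑ p, ∑ c ∈ Finset.univ.filter (fun c => blk n B c = p),
      if (c.1 : ℕ) < k ∧ k ≤ (c.2 : ℕ) then f c.1 c.2 else 0 := by
    rw [Finset.sum_fiberwise, Fintype.sum_prod_type]; rfl
  rw [e1, e2]
  push_cast
  refine Finset.sum_le_sum fun p _ => ?_
  have hR : 0 ≤ ∑ c ∈ Finset.univ.filter (fun c => blk n B c = p),
      if (c.1 : ℕ) < k ∧ k ≤ (c.2 : ℕ) then f c.1 c.2 else 0 :=
    Finset.sum_nonneg fun c _ => by split_ifs; exacts [hf _ _, le_rfl]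
  by_cases hex : ∃ c, sblk n B c = p ∧ ((c.1 : ℕ) < k ∧ k ≤ (c.2 : ℕ)) ∧
      (1 ≤ (c.1 : ℕ) / B ∧ (c.1 : ℕ) / B + 2 ≤ (c.2 : ℕ) / B ∧ (c.2 : ℕ) / B + 1 ≤ n / B)
  · obtain ⟨c0, hc0, hcross, hcond⟩ := hex
    have hp1 : (p.1 : ℕ) = c0.1 / B - 1 := by rw [← hc0]; rfl
    have hp2 : (p.2 : ℕ) = c0.2 / B + 1 := by rw [← hc0]; rfl
    have hgood : goodBlk n B p := by unfold goodBlk; omega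
    have hr : ∑ c ∈ Finset.univ.filter (fun c => blk n B c = p),
        (if (c.1 : ℕ) < k ∧ k ≤ (c.2 : ℕ) then f c.1 c.2 else 0) = boxMass n B f p := by
      refine Finset.sum_congr rfl fun c hc => ?_
      rw [if_pos]
      have hc := (Finset.mem_filter.1 hc).2
      have hq1 : (p.1 : ℕ) = c.1 / B := by rw [← hc]; rfl
      have hq2 : (p.2 : ℕ) = c.2 / B := by rw [← hc]; rfl
      have g1 := lt_of_div_lt' (a := c.1) (b := c0.1) (B := B) (by omega)
      have g2 := lt_of_div_lt' (a := c0.2) (b := c.2) (B := B) (by omega)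
      omega
    rw [hr]
    have hnum : (boxNum n B f p : ℝ) ≤ boxMass n B f p := by
      unfold boxNum
      rw [if_pos hgood]
      exact Nat.floor_le (Finset.sum_nonneg fun c _ => hf _ _)
    refine le_trans ?_ hnum
    rw [← ht p]
    set md : Fin (n + 1) × Fin (n + 1) → Fin B × Fin B :=
      fun c => (⟨c.1 % B, Nat.mod_lt _ hB⟩, ⟨c.2 % B, Nat.mod_lt _ hB⟩) with hmd
    set S := (Finset.univ.filter (fun c => sblk n B c = p)).filter (fun c : Fin (n + 1) × Fin (n + 1) =>
      1 ≤ (c.1 : ℕ) / B ∧ (c.1 : ℕ) / B + 2 ≤ (c.2 : ℕ) / B ∧ (c.2 : ℕ) / B + 1 ≤ n / B) with hS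
    have h1 : (∑ c ∈ Finset.univ.filter (fun c => sblk n B c = p),
        if (c.1 : ℕ) < k ∧ k ≤ (c.2 : ℕ) then boxTable n B hB t c.1 c.2 else 0) ≤ ∑ c ∈ S, t p (md c) := by
      have e3 : ∑ c ∈ S, t p (md c) = ∑ c ∈ Finset.univ.filter (fun c => sblk n B c = p),
          if 1 ≤ (c.1 : ℕ) / B ∧ (c.1 : ℕ) / B + 2 ≤ (c.2 : ℕ) / B ∧ (c.2 : ℕ) / B + 1 ≤ n / B then
            t p (md c) else 0 := by
        rw [hS, Finset.sum_filter]
      rw [e3]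
      refine Finset.sum_le_sum fun c hc => ?_
      have hc := (Finset.mem_filter.1 hc).2
      unfold boxTable
      rw [show ((c.1, c.2) : Fin (n + 1) × Fin (n + 1)) = c from rfl, hc]
      split_ifs <;> simp [hmd]
    have h2 : ∑ c ∈ S, t p (md c) ≤ ∑ c, t p c := by
      rw [← Finset.sum_image (f := t p) (g := md)]
      · exact Finset.sum_le_sum_of_subset (Finset.subset_univ _)
      · intro c hc c' hc' h
        simp only [hS, Finset.coe_filter, Finset.mem_filter, Finset.mem_univ, true_and,
          Set.mem_ofPred_eq] at hc hc'
        have a1 := congrArg (fun z => (z.1 : ℕ)) (hc.1.trans hc'.1.symm)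
        have a2 := congrArg (fun z => (z.2 : ℕ)) (hc.1.trans hc'.1.symm)
        simp only [sblk] at a1 a2
        simp only [hmd, Prod.mk.injEq, Fin.mk.injEq] at h
        ext
        · exact eq_of_div_mod (by omega) h.1
        · exact eq_of_div_mod (by omega) h.2
    have := h1.trans h2
    exact_mod_cast this
  · rw [Finset.sum_eq_zero]
    · exact hR
    · intro c hc
      have hc := (Finset.mem_filter.1 hc).2
      unfold boxTable
      split_ifs with h1 h2
      · exact absurd ⟨c, hc, h1, h2⟩ hex
      · simp
      · simp

lemma box_count (n B : ℕ) (hB : 1 ≤ B) (N : ℕ → ℕ) (f : Fin (n + 1) → Fin (n + 1) → ℝ)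
    (hf : f ∈ FlowPolytope n fun i => ((extend n fun k : Fin n => (N k : ℤ)) i : ℝ)) :
    ∏ p, (B * B + boxNum n B f p - 1).choose (boxNum n B f p) ≤
      Kn n (extend n fun k : Fin n => (N k : ℤ)) := by
  classical
  set T : Finset (Fin (n + 2) × Fin (n + 2) → Fin B × Fin B → ℕ) :=
    Fintype.piFinset (fun p => Finset.piAntidiag Finset.univ (boxNum n B f p)) with hT
  have hcard : T.card = ∏ p, (B * B + boxNum n B f p - 1).choose (boxNum n B f p) := by
    rw [hT, Fintype.card_piFinset]
    refine Finset.prod_congr rfl fun p _ => ?_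
    rw [card_piAntidiag_univ]
    simp
  rw [← hcard]
  have hmem : ∀ t ∈ T, ∀ p, ∑ c, t p c = boxNum n B f p := by
    intro t ht p
    have := (Fintype.mem_piFinset.1 ht) p
    exact (Finset.mem_piAntidiag.1 this).1
  refine card_le_Kn N T (boxTable n B hB) ?_ ?_ ?_
  · intro s hs t ht h
    funext p c
    by_cases hg : goodBlk n B p
    · obtain ⟨hg1, hg2⟩ := hg
      have hlt : ((p.2 : ℕ) - 1 + 1) * B ≤ n := by
        rw [← Nat.le_div_iff_mul_le (by omega)]; omega
      have hc1 := c.1.2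
      have hc2 := c.2.2
      have hj : B * ((p.2 : ℕ) - 1) + c.2 ≤ n := by nlinarith
      have hij : B * ((p.1 : ℕ) + 1) ≤ B * ((p.2 : ℕ) - 1) := Nat.mul_le_mul_left _ (by omega)
      have hi : B * ((p.1 : ℕ) + 1) + c.1 ≤ n := by nlinarith
      have di : (B * ((p.1 : ℕ) + 1) + c.1) / B = p.1 + 1 := by
        rw [Nat.mul_add_div (by omega), Nat.div_eq_of_lt hc1]
      have dj : (B * ((p.2 : ℕ) - 1) + c.2) / B = p.2 - 1 := by
        rw [Nat.mul_add_div (by omega), Nat.div_eq_of_lt hc2, Nat.add_zero]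
      have mi : (B * ((p.1 : ℕ) + 1) + c.1) % B = c.1 := by
        rw [Nat.mul_add_mod, Nat.mod_eq_of_lt hc1]
      have mj : (B * ((p.2 : ℕ) - 1) + c.2) % B = c.2 := by
        rw [Nat.mul_add_mod, Nat.mod_eq_of_lt hc2]
      have hev : ∀ t : Fin (n + 2) × Fin (n + 2) → Fin B × Fin B → ℕ,
          boxTable n B hB t ⟨_, Nat.lt_succ_of_le hi⟩ ⟨_, Nat.lt_succ_of_le hj⟩ = t p c := by
        intro t
        unfold boxTable
        simp only [di, dj, mi, mj]
        rw [if_pos (by omega)]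
        have : sblk n B (⟨_, Nat.lt_succ_of_le hi⟩, ⟨_, Nat.lt_succ_of_le hj⟩) = p := by
          unfold sblk
          ext
          · simp only [di]; omega
          · simp only [dj]; omega
        rw [this]
      rw [← hev s, ← hev t, h]
    · have hz : boxNum n B f p = 0 := by unfold boxNum; rw [if_neg hg]
      have hzero : ∀ t ∈ T, t p c = 0 := by
        intro t ht
        have := hmem t ht p
        rw [hz] at this
        exact Finset.sum_eq_zero_iff.1 this c (Finset.mem_univ c)
      rw [hzero s hs, hzero t ht]
  · intro t _ i j hij
    unfold boxTable
    rw [if_neg]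
    rintro ⟨_, h, _⟩
    have := add_two_le_of_div hB h
    omega
  · intro t ht k hk
    have h1 := boxTable_flux n B hB f (polytope_nonneg hf) t (hmem t ht) k
    rw [polytope_flux hf k hk] at h1
    exact_mod_cast h1

lemma near_card (n B : ℕ) (hB : 1 ≤ B) (i : Fin (n + 1)) :
    (Finset.univ.filter fun j : Fin (n + 1) => i < j ∧ ¬ ((i : ℕ) / B + 4 ≤ (j : ℕ) / B)).card ≤ 4 * B := by
  have : (Finset.Ico (i : ℕ) (i + 4 * B)).card = 4 * B := by simp
  rw [← this]
  refine Finset.card_le_card_of_injOn (fun j => (j : ℕ)) ?_ ?_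
  · intro j hj
    have hj := (Finset.mem_filter.1 hj).2
    have h1 : (j : ℕ) / B < (i : ℕ) / B + 4 := by omega
    rw [Nat.div_lt_iff_lt_mul (by omega)] at h1
    have h2 := Nat.div_mul_le_self (i : ℕ) B
    have h3 := Fin.lt_def.1 hj.1
    simp only [Finset.coe_Ico, Set.mem_Ico]
    constructor
    · omega
    · nlinarith
  · intro j _ j' _ h
    exact Fin.ext h

lemma boxMass_le (n B : ℕ) (N : ℕ → ℕ) (f : Fin (n + 1) → Fin (n + 1) → ℝ)
    (hf : f ∈ FlowPolytope n fun i => ((extend n fun k : Fin n => (N k : ℤ)) i : ℝ)) (hB : 1 ≤ B)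
    (p : Fin (n + 2) × Fin (n + 2)) (hp : goodBlk n B p) :
    boxMass n B f p ≤ ((∑ i ∈ range n, N i : ℕ) : ℝ) := by
  classical
  have h0 := polytope_nonneg hf
  obtain ⟨hp1, hp2⟩ := hp
  rw [Nat.le_div_iff_mul_le (by omega)] at hp2
  have h1 : boxMass n B f p ≤ flux f (p.2 * B) := by
    have e2 : flux f (p.2 * B) = ∑ c : Fin (n + 1) × Fin (n + 1),
        if (c.1 : ℕ) < p.2 * B ∧ p.2 * B ≤ (c.2 : ℕ) then f c.1 c.2 else 0 := by
      rw [Fintype.sum_prod_type]; rfl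
    rw [e2]
    unfold boxMass
    rw [Finset.sum_filter]
    refine Finset.sum_le_sum fun c _ => ?_
    split_ifs with a b b
    · exact le_rfl
    · exfalso
      have hq1 : (p.1 : ℕ) = c.1 / B := by rw [← a]; rfl
      have hq2 : (p.2 : ℕ) = c.2 / B := by rw [← a]; rfl
      apply b
      constructor
      · rw [← Nat.div_lt_iff_lt_mul (by omega)]; omega
      · rw [← Nat.le_div_iff_mul_le (by omega)]; omega
    · exact h0 _ _
    · exact le_rfl
  rw [polytope_flux hf _ hp2] at h1
  refine h1.trans ?_
  exact_mod_cast Finset.sum_le_sum_of_subset (Finset.range_mono hp2)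

lemma main_bound (n B w : ℕ) (hB : 1 ≤ B) (N : ℕ → ℕ) (f : Fin (n + 1) → Fin (n + 1) → ℝ)
    (hf : f ∈ FlowPolytope n fun i => ((extend n fun k : Fin n => (N k : ℤ)) i : ℝ))
    (hw : (∑ i ∈ range n, N i) + B * B + 1 ≤ w) :
    flowEntropy n (fun i => ((extend n fun k : Fin n => (N k : ℤ)) i : ℝ)) f ≤
      Real.log (Kn n (extend n fun k : Fin n => (N k : ℤ))) +
      (6 * ((n / B : ℕ) + 1 : ℝ) ^ 2 + (n + 1) * (4 * B) + (n + 1)) * (Real.log w + 1) := by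
  classical
  have h0 := polytope_nonneg hf
  set W := ∑ i ∈ range n, N i with hW
  have hw' : (W : ℝ) + 1 ≤ w := by exact_mod_cast (by omega : W + 1 ≤ w)
  set L := Real.log w + 1 with hL
  have hL0 : 0 ≤ L := by
    have := Real.log_nonneg (show (1 : ℝ) ≤ w by have : (0 : ℝ) ≤ W := by positivity
                                                 linarith)
    linarith
  have hent : ∀ t : ℝ, 0 ≤ t → t ≤ W → entH t ≤ L := by
    intro t h1 h2
    refine (entH_le h1 h2).trans ?_
    have := Real.log_le_log (show (0 : ℝ) < W + 1 by positivity) hw'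
    linarith
  -- slack
  have hslack : (∑ j : Fin (n + 1), if 0 < (j : ℕ) ∧ (j : ℕ) < n then
      entH (∑ i : Fin (n + 1), if i < j then
        (((extend n fun k : Fin n => (N k : ℤ)) i : ℝ) - f i j) else 0) else 0) ≤ (n + 1) * L := by
    calc _ ≤ ∑ j : Fin (n + 1), L := by
          refine Finset.sum_le_sum fun j _ => ?_
          split_ifs with h
          · have := entropy_ge hf j h.2
            exact hent _ this.1 this.2
          · exact hL0
      _ = _ := by simp
  -- near
  have hnear : (∑ i : Fin (n + 1), ∑ j : Fin (n + 1),
      if i < j ∧ ¬ ((i : ℕ) / B + 4 ≤ (j : ℕ) / B) then entH (f i j) else 0) ≤ (n + 1) * (4 * B) * L := by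
    calc _ ≤ ∑ i : Fin (n + 1), (4 * B : ℝ) * L := by
          refine Finset.sum_le_sum fun i _ => ?_
          rw [← Finset.sum_filter]
          refine (Finset.sum_le_card_nsmul _ _ L fun j _ => hent _ (h0 i j) (polytope_le hf i j)).trans ?_
          rw [nsmul_eq_mul]
          have := near_card n B hB i
          have h2 : ((Finset.univ.filter fun j : Fin (n + 1) =>
            i < j ∧ ¬ ((i : ℕ) / B + 4 ≤ (j : ℕ) / B)).card : ℝ) ≤ 4 * B := by exact_mod_cast this
          exact mul_le_mul_of_nonneg_right h2 hL0
      _ = _ := by simp; ring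
  -- far
  have hchoose : ∀ p, 0 < (B * B + boxNum n B f p - 1).choose (boxNum n B f p) := by
    intro p
    apply Nat.choose_pos
    have : 1 ≤ B * B := Nat.mul_pos hB hB
    omega
  have hlogK : ∑ p, Real.log ((B * B + boxNum n B f p - 1).choose (boxNum n B f p) : ℕ) ≤
      Real.log (Kn n (extend n fun k : Fin n => (N k : ℤ))) := by
    rw [← Real.log_prod (fun p _ => by have := hchoose p; positivity)]
    apply Real.log_le_log
    · exact Finset.prod_pos fun p _ => by have := hchoose p; positivity
    · exact_mod_cast box_count n B hB N f hf
  have hgcard : ((Finset.univ.filter fun p => goodBlk n B p).card : ℝ) ≤ ((n / B : ℕ) + 1 : ℝ) ^ 2 := by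
    have h1 : (Finset.univ.filter fun p => goodBlk n B p).card ≤
        ((Finset.range (n / B + 1)) ×ˢ (Finset.range (n / B + 1))).card := by
      refine Finset.card_le_card_of_injOn (fun p => ((p.1 : ℕ), (p.2 : ℕ))) ?_ ?_
      · intro p hp
        have hp := (Finset.mem_filter.1 hp).2
        unfold goodBlk at hp
        simp
        omega
      · intro p _ p' _ h
        simp only [Prod.mk.injEq] at h
        ext
        exacts [h.1, h.2]
    rw [Finset.card_product, Finset.card_range, ← sq] at h1
    exact_mod_cast h1
  have hfar : (∑ i : Fin (n + 1), ∑ j : Fin (n + 1),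
      if (i : ℕ) / B + 4 ≤ (j : ℕ) / B then entH (f i j) else 0) ≤
      ∑ p, (Real.log ((B * B + boxNum n B f p - 1).choose (boxNum n B f p) : ℕ) +
        if goodBlk n B p then 6 * L else 0) := by
    have e : (∑ i : Fin (n + 1), ∑ j : Fin (n + 1),
      if (i : ℕ) / B + 4 ≤ (j : ℕ) / B then entH (f i j) else 0) =
      ∑ p, ∑ c ∈ Finset.univ.filter (fun c => blk n B c = p),
        if (c.1 : ℕ) / B + 4 ≤ (c.2 : ℕ) / B then entH (f c.1 c.2) else 0 := by
      rw [Finset.sum_fiberwise, Fintype.sum_prod_type]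
    rw [e]
    refine Finset.sum_le_sum fun p _ => ?_
    by_cases hg : goodBlk n B p
    · rw [if_pos hg]
      have e1 : (∑ c ∈ Finset.univ.filter (fun c => blk n B c = p),
          if (c.1 : ℕ) / B + 4 ≤ (c.2 : ℕ) / B then entH (f c.1 c.2) else 0) ≤
          ∑ c ∈ Finset.univ.filter (fun c => blk n B c = p), entH (f c.1 c.2) := by
        refine Finset.sum_le_sum fun c _ => ?_
        split_ifs
        · exact le_rfl
        · exact entH_nonneg (h0 _ _)
      refine e1.trans ?_
      have hnum : boxNum n B f p = ⌊boxMass n B f p⌋₊ := by unfold boxNum; rw [if_pos hg]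
      refine box_estimate _ (fun c : Fin (n + 1) × Fin (n + 1) => f c.1 c.2) (B * B) (boxNum n B f p) w
        (Nat.mul_pos hB hB) ?_ (fun c _ => h0 _ _) ?_ ?_
      · have : B * B = (Finset.univ : Finset (Fin B × Fin B)).card := by simp
        rw [this]
        refine Finset.card_le_card_of_injOn
          (fun c : Fin (n + 1) × Fin (n + 1) => (⟨c.1 % B, Nat.mod_lt _ hB⟩, ⟨c.2 % B, Nat.mod_lt _ hB⟩)) (by simp) ?_
        intro c hc c' hc' h
        have hc := (Finset.mem_filter.1 hc).2
        have hc' := (Finset.mem_filter.1 hc').2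
        have a1 := congrArg (fun z => (z.1 : ℕ)) (hc.trans hc'.symm)
        have a2 := congrArg (fun z => (z.2 : ℕ)) (hc.trans hc'.symm)
        simp only [blk] at a1 a2
        simp only [Prod.mk.injEq, Fin.mk.injEq] at h
        ext
        · exact eq_of_div_mod a1 h.1
        · exact eq_of_div_mod a2 h.2
      · rw [hnum]
        exact (Nat.lt_floor_add_one (boxMass n B f p)).le
      · have h1 : boxNum n B f p ≤ W := by
          rw [hnum]
          exact Nat.floor_le_of_le (boxMass_le n B N f hf hB p hg)
        omega
    · rw [if_neg hg]
      have hz : boxNum n B f p = 0 := by unfold boxNum; rw [if_neg hg]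
      rw [hz, Finset.sum_eq_zero]
      · simp
      · intro c hc
        have hc := (Finset.mem_filter.1 hc).2
        rw [if_neg]
        intro h
        apply hg
        rw [← hc]
        refine ⟨h, ?_⟩
        exact Nat.div_le_div_right (by omega)
  rw [Finset.sum_add_distrib, ← Finset.sum_filter, Finset.sum_const, nsmul_eq_mul] at hfar
  have hsplit : (∑ i : Fin (n + 1), ∑ j : Fin (n + 1), if i < j then entH (f i j) else 0) =
      (∑ i : Fin (n + 1), ∑ j : Fin (n + 1),
      if (i : ℕ) / B + 4 ≤ (j : ℕ) / B then entH (f i j) else 0) +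
      (∑ i : Fin (n + 1), ∑ j : Fin (n + 1),
      if i < j ∧ ¬ ((i : ℕ) / B + 4 ≤ (j : ℕ) / B) then entH (f i j) else 0) := by
    rw [← Finset.sum_add_distrib]
    refine Finset.sum_congr rfl fun i _ => ?_
    rw [← Finset.sum_add_distrib]
    refine Finset.sum_congr rfl fun j _ => ?_
    by_cases h : (i : ℕ) / B + 4 ≤ (j : ℕ) / B
    · have : i < j := Fin.lt_def.2 (lt_of_div_lt' (B := B) (by omega))
      simp [h, this]
    · simp [h]
  unfold flowEntropy
  rw [hsplit]
  have hmul := mul_le_mul_of_nonneg_right hgcard (show 0 ≤ 6 * L by positivity)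
  nlinarith [hslack, hnear, hfar, hlogK, hmul]


lemma E_bound (N : ℕ → ℕ) (a p : ℝ) (ha : 0 < a) (hp : 0 < p)
    (hgrowth : ∀ k : ℕ, (N k : ℝ) ≤ a * ((k : ℝ) + 1) ^ p) (n : ℕ) (hn : 1 ≤ n) :
    ∃ B w : ℕ, 1 ≤ B ∧ (∑ i ∈ range n, N i) + B * B + 1 ≤ w ∧
      0 ≤ Real.log w + 1 ∧
      (6 * ((n / B : ℕ) + 1 : ℝ) ^ 2 + (n + 1) * (4 * B) + (n + 1)) * (Real.log w + 1) ≤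
        42 * (n : ℝ) ^ (4 / 3 : ℝ) * (Real.log (a + 5) + 1 + (p + 1) * Real.log n) := by
  have hn1 : (1 : ℝ) ≤ n := by exact_mod_cast hn
  have hn0 : (0 : ℝ) < n := by linarith
  set x : ℝ := (n : ℝ) ^ (1 / 3 : ℝ) with hx
  have hx1 : 1 ≤ x := Real.one_le_rpow hn1 (by norm_num)
  have hx3 : x ^ 3 = n := by
    rw [hx, ← Real.rpow_natCast, ← Real.rpow_mul hn0.le]; norm_num
  have hx4 : (n : ℝ) ^ (4 / 3 : ℝ) = x ^ 4 := by
    rw [hx, ← Real.rpow_natCast, ← Real.rpow_mul hn0.le]; norm_num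
  set B := ⌈x⌉₊ with hB
  have hBx : x ≤ B := Nat.le_ceil x
  have hBx' : (B : ℝ) ≤ 2 * x := by have := (Nat.ceil_lt_add_one (show 0 ≤ x by linarith)).le; linarith
  have hB1 : 1 ≤ B := by
    have : (1 : ℝ) ≤ B := by linarith
    exact_mod_cast this
  have hx2 : 1 ≤ x ^ 2 := one_le_pow₀ hx1
  have hx34 : x ^ 3 ≤ x ^ 4 := pow_le_pow_right₀ hx1 (by norm_num)
  have hx24 : x ^ 2 ≤ x ^ 4 := pow_le_pow_right₀ hx1 (by norm_num)
  have hx23 : x ^ 2 ≤ x ^ 3 := pow_le_pow_right₀ hx1 (by norm_num)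
  refine ⟨B, (∑ i ∈ range n, N i) + B * B + 1, hB1, le_rfl, ?_, ?_⟩
  · have := Real.log_nonneg (show (1 : ℝ) ≤ (((∑ i ∈ range n, N i) + B * B + 1 : ℕ) : ℝ) by
      exact_mod_cast Nat.le_add_left 1 _)
    linarith
  have hdiv : ((n / B : ℕ) : ℝ) ≤ x ^ 2 := by
    refine (Nat.cast_div_le).trans ?_
    rw [div_le_iff₀ (by linarith), ← hx3]
    nlinarith
  have hW : ((∑ i ∈ range n, N i : ℕ) : ℝ) ≤ a * (n : ℝ) ^ (p + 1) := by
    push_cast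
    calc ∑ i ∈ range n, (N i : ℝ) ≤ ∑ i ∈ range n, a * (n : ℝ) ^ p := by
          refine Finset.sum_le_sum fun i hi => (hgrowth i).trans ?_
          have : ((i : ℝ) + 1) ≤ n := by exact_mod_cast Finset.mem_range.1 hi
          gcongr
      _ = _ := by rw [Real.rpow_add hn0]; simp; ring
  have hnp : (n : ℝ) ≤ (n : ℝ) ^ (p + 1) := by
    calc (n : ℝ) = (n : ℝ) ^ (1 : ℝ) := by simp
      _ ≤ _ := Real.rpow_le_rpow_of_exponent_le hn1 (by linarith)
  have hlog : Real.log (((∑ i ∈ range n, N i) + B * B + 1 : ℕ) : ℝ) ≤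
      Real.log (a + 5) + (p + 1) * Real.log n := by
    rw [← Real.log_rpow hn0, ← Real.log_mul (by positivity) (by positivity)]
    apply Real.log_le_log (by positivity)
    rw [Nat.cast_add, Nat.cast_add]
    push_cast at hW ⊢
    have : (B : ℝ) * B ≤ 4 * n := by rw [← hx3]; nlinarith
    nlinarith
  have hcoef : (6 * ((n / B : ℕ) + 1 : ℝ) ^ 2 + (n + 1) * (4 * B) + (n + 1)) ≤ 42 * x ^ 4 := by
    have h1 : ((n / B : ℕ) + 1 : ℝ) ^ 2 ≤ 4 * x ^ 4 := by
      calc ((n / B : ℕ) + 1 : ℝ) ^ 2 ≤ (2 * x ^ 2) ^ 2 := by gcongr; linarith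
        _ = _ := by ring
    have h2 : ((n : ℝ) + 1) ≤ 2 * x ^ 3 := by rw [hx3]; linarith
    have h3 : ((n : ℝ) + 1) * (4 * B) ≤ 16 * x ^ 4 := by
      calc ((n : ℝ) + 1) * (4 * B) ≤ (2 * x ^ 3) * (4 * (2 * x)) := by gcongr
        _ = _ := by ring
    linarith
  rw [hx4]
  have hpos : 0 ≤ Real.log (((∑ i ∈ range n, N i) + B * B + 1 : ℕ) : ℝ) :=
    Real.log_nonneg (by exact_mod_cast Nat.le_add_left 1 _)
  calc _ ≤ 42 * x ^ 4 * (Real.log (((∑ i ∈ range n, N i) + B * B + 1 : ℕ) : ℝ) + 1) := by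
        apply mul_le_mul_of_nonneg_right hcoef (by linarith)
    _ ≤ _ := by
        apply mul_le_mul_of_nonneg_left (by linarith) (by positivity)

lemma K_bound (N : ℕ → ℕ) (hpos : ∀ k, 0 < N k) (n : ℕ) (hn : 64 ≤ n) :
    (n : ℝ) ^ (3 / 2 : ℝ) / 16 ≤ Real.log (Kn n (extend n fun k : Fin n => (N k : ℤ))) := by
  have hn1 : (64 : ℝ) ≤ n := by exact_mod_cast hn
  have hn0 : (0 : ℝ) < n := by linarith
  set y : ℝ := Real.sqrt n with hy
  have hy2 : y ^ 2 = n := Real.sq_sqrt hn0.le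
  have hy0 : 0 ≤ y := Real.sqrt_nonneg _
  have hy8 : 8 ≤ y := Real.le_sqrt_of_sq_le (by norm_num; linarith)
  have hy3 : (n : ℝ) ^ (3 / 2 : ℝ) = y ^ 3 := by
    rw [hy, Real.sqrt_eq_rpow, ← Real.rpow_natCast, ← Real.rpow_mul hn0.le]; norm_num
  set d := ⌊y / 2⌋₊ with hd
  have hd1 : (d : ℝ) ≤ y / 2 := Nat.floor_le (by linarith)
  have hd2 : y / 4 ≤ d := by have := Nat.lt_floor_add_one (y / 2); linarith
  have hle : (((d + 1) ^ 2 + d + 1 : ℕ) : ℝ) ≤ n / 2 := by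
    push_cast; rw [← hy2]; nlinarith
  have hle' : (d + 1) ^ 2 + d + 1 ≤ n := by
    have : (((d + 1) ^ 2 + d + 1 : ℕ) : ℝ) ≤ n := by linarith
    exact_mod_cast this
  set u := n - ((d + 1) ^ 2 + d + 1) with hu
  have hu' : (n : ℝ) / 2 ≤ u := by
    rw [hu, Nat.cast_sub hle']; linarith
  have h1 := Kn_lower n d u N hpos (by omega)
  have h2 : ((2 : ℝ) ^ (u * d)) ≤ Kn n (extend n fun k : Fin n => (N k : ℤ)) := by exact_mod_cast h1
  have h3 := Real.log_le_log (by positivity) h2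
  rw [Real.log_pow] at h3
  refine le_trans ?_ h3
  rw [hy3]
  have h4 : y ^ 3 / 8 ≤ ((u * d : ℕ) : ℝ) := by
    push_cast
    calc y ^ 3 / 8 = (n / 2) * (y / 4) := by rw [← hy2]; ring
      _ ≤ _ := by gcongr
  have h5 := Real.log_two_gt_d9
  have h6 : 0 ≤ y ^ 3 := by positivity
  nlinarith

/-- **Theorem (asymptotics via maximum flow entropy).** For a sequence of
positive integers `N_0, N_1, …` of at most polynomial growth, the maximum flow
entropy asymptotically approximates `log K_n(N)`:
`log K_n(N^{(n)}) / sup_{f ∈ F_n(N^{(n)})} H(f) → 1` as `n → ∞`. -/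
theorem kostant_log_div_sup_entropy_tendsto_one (N : ℕ → ℕ) (hpos : ∀ k, 0 < N k)
    (a p : ℝ) (ha : 0 < a) (hp : 0 < p)
    (hgrowth : ∀ k : ℕ, (N k : ℝ) ≤ a * ((k : ℝ) + 1) ^ p) :
    Filter.Tendsto
      (fun n : ℕ =>
        Real.log (Kn n (extend n fun k : Fin n => (N k : ℤ))) /
          sSup ((fun f =>
              flowEntropy n (fun i => ((extend n fun k : Fin n => (N k : ℤ)) i : ℝ)) f) ''
            FlowPolytope n fun i => ((extend n fun k : Fin n => (N k : ℤ)) i : ℝ)))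
      Filter.atTop (nhds 1) := by
  set g : ℕ → ℝ := fun n =>
    672 * ((Real.log (a + 5) + 1) * (n : ℝ) ^ (-(1 / 6 : ℝ)) +
      (p + 1) * (Real.log n / (n : ℝ) ^ (1 / 6 : ℝ))) with hg
  have hg0 : Filter.Tendsto g Filter.atTop (nhds 0) := by
    have t1 : Filter.Tendsto (fun n : ℕ => (n : ℝ) ^ (-(1 / 6 : ℝ))) Filter.atTop (nhds 0) :=
      (tendsto_rpow_neg_atTop (by norm_num)).comp tendsto_natCast_atTop_atTop
    have t2 : Filter.Tendsto (fun n : ℕ => Real.log n / (n : ℝ) ^ (1 / 6 : ℝ)) Filter.atTop (nhds 0) :=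
      ((isLittleO_log_rpow_atTop (show (0 : ℝ) < 1 / 6 by norm_num)).tendsto_div_nhds_zero).comp
        tendsto_natCast_atTop_atTop
    have := ((t1.const_mul (Real.log (a + 5) + 1)).add (t2.const_mul (p + 1))).const_mul 672
    simpa [hg] using this
  have hlow : Filter.Tendsto (fun n => 1 - g n) Filter.atTop (nhds 1) := by
    simpa using hg0.const_sub 1
  have key : ∀ n : ℕ, 64 ≤ n → 1 - g n ≤ Real.log (Kn n (extend n fun k : Fin n => (N k : ℤ))) /
          sSup ((fun f =>
              flowEntropy n (fun i => ((extend n fun k : Fin n => (N k : ℤ)) i : ℝ)) f) ''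
            FlowPolytope n fun i => ((extend n fun k : Fin n => (N k : ℤ)) i : ℝ)) ∧
      Real.log (Kn n (extend n fun k : Fin n => (N k : ℤ))) /
          sSup ((fun f =>
              flowEntropy n (fun i => ((extend n fun k : Fin n => (N k : ℤ)) i : ℝ)) f) ''
            FlowPolytope n fun i => ((extend n fun k : Fin n => (N k : ℤ)) i : ℝ)) ≤ 1 := by
    intro n hn
    have hn0 : (0 : ℝ) < n := by exact_mod_cast (by omega : 0 < n)
    have hKb := K_bound N hpos n hn
    obtain ⟨B, w, hB, hw, hw1, hE⟩ := E_bound N a p ha hp hgrowth n (by omega)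
    set E := (6 * ((n / B : ℕ) + 1 : ℝ) ^ 2 + (n + 1) * (4 * B) + (n + 1)) * (Real.log w + 1) with hEdef
    have hE0 : 0 ≤ E := by rw [hEdef]; positivity
    set LK := Real.log (Kn n (extend n fun k : Fin n => (N k : ℤ))) with hLK
    set H := (fun f => flowEntropy n (fun i => ((extend n fun k : Fin n => (N k : ℤ)) i : ℝ)) f) with hH
    set P := FlowPolytope n fun i => ((extend n fun k : Fin n => (N k : ℤ)) i : ℝ) with hP
    have hLK0 : 0 < LK := lt_of_lt_of_le (by positivity) hKb
    have hK0 : 0 < Kn n (extend n fun k : Fin n => (N k : ℤ)) := by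
      rcases Nat.eq_zero_or_pos (Kn n (extend n fun k : Fin n => (N k : ℤ))) with h | h
      · rw [hLK, h] at hLK0; simp at hLK0
      · exact h
    obtain ⟨f0, hf0, hf0'⟩ := upper_bound n N hK0
    have hub : ∀ y ∈ H '' P, y ≤ LK + E := by
      rintro y ⟨f, hf, rfl⟩
      exact main_bound n B w hB N f hf hw
    have hS1 : sSup (H '' P) ≤ LK + E := csSup_le ⟨_, f0, hf0, rfl⟩ hub
    have hS2 : LK ≤ sSup (H '' P) := hf0'.trans (le_csSup ⟨_, hub⟩ ⟨f0, hf0, rfl⟩)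
    have hS0 : 0 < sSup (H '' P) := lt_of_lt_of_le hLK0 hS2
    refine ⟨?_, (div_le_one hS0).2 hS2⟩
    have hgE : E ≤ g n * LK := by
      have e1 : 42 * (n : ℝ) ^ (4 / 3 : ℝ) * (Real.log (a + 5) + 1 + (p + 1) * Real.log n) =
          g n * ((n : ℝ) ^ (3 / 2 : ℝ) / 16) := by
        have e2 : (n : ℝ) ^ (4 / 3 : ℝ) = (n : ℝ) ^ (-(1 / 6 : ℝ)) * (n : ℝ) ^ (3 / 2 : ℝ) := by
          rw [← Real.rpow_add hn0]; norm_num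
        simp only [hg]
        rw [e2, div_eq_mul_inv (Real.log n), ← Real.rpow_neg hn0.le]
        ring
      have hg1 : 0 ≤ g n := by
        have h1 : 0 ≤ Real.log (a + 5) := Real.log_nonneg (by linarith)
        have h2 : 0 ≤ Real.log n := Real.log_natCast_nonneg n
        simp only [hg]
        positivity
      calc E ≤ _ := hE
        _ = _ := e1
        _ ≤ g n * LK := mul_le_mul_of_nonneg_left hKb hg1
    rw [le_div_iff₀ hS0]
    have hg1 : 0 ≤ g n := by
      by_contra hc
      have := mul_neg_of_neg_of_pos (not_le.1 hc) hLK0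
      linarith
    by_cases h1 : g n ≤ 1
    · have := mul_le_mul_of_nonneg_left hS1 (show 0 ≤ 1 - g n by linarith)
      nlinarith
    · have := mul_nonneg (show 0 ≤ g n - 1 by linarith) hS0.le
      nlinarith
  refine tendsto_of_tendsto_of_tendsto_of_le_of_le' hlow tendsto_const_nhds ?_ ?_
  · filter_upwards [Filter.eventually_ge_atTop 64] with n hn using (key n hn).1
  · filter_upwards [Filter.eventually_ge_atTop 64] with n hn using (key n hn).2
end

section
/- For every real number t > 0 the following inequalities hold: e·(t + 1/2) ≥ (t+1)^{t+1}/t^{t}; (t+1)^{t+1}/t^{t} ≥ e·(t + 1/2 − 1/(24t)); (t+1)^{t+1}/t^{t} ≥ (e/t)^{t}; and (t+1)^{t+1}/t^{t} ≥ e·t + 1. -/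
lemma aux_mono (k k' : ℝ → ℝ) (hk : ∀ x ∈ Set.Icc (0:ℝ) (1/2), HasDerivAt k (k' x) x)
    (hn : ∀ x ∈ Set.Icc (0:ℝ) (1/2), 0 ≤ k' x) : k 0 ≤ k (1/2) := by
  have hm : MonotoneOn k (Set.Icc (0:ℝ) (1/2)) := by
    apply monotoneOn_of_deriv_nonneg (convex_Icc _ _)
    · intro x hx
      exact (hk x hx).continuousAt.continuousWithinAt
    · intro x hx
      exact (hk x (interior_subset hx)).differentiableAt.differentiableWithinAt
    · intro x hx
      rw [(hk x (interior_subset hx)).deriv]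
      exact hn x (interior_subset hx)
  exact hm (by norm_num) (by norm_num) (by norm_num)

lemma aux_deriv (m x : ℝ) (h1 : 0 < m + x) (h2 : 0 < m - x) :
    HasDerivAt (fun x => (m + x) * Real.log (m + x) - (m - x) * Real.log (m - x))
      (Real.log (m + x) + Real.log (m - x) + 2) x := by
  have a : HasDerivAt (fun x => m + x) 1 x := by simpa using (hasDerivAt_id x).const_add m
  have b : HasDerivAt (fun x => m - x) (-1) x := by simpa using (hasDerivAt_id x).const_sub m
  have := (a.mul (a.log h1.ne')).sub (b.mul (b.log h2.ne'))
  refine this.congr_deriv ?_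
  have c1 : (m + x) * (1 / (m + x)) = 1 := mul_one_div_cancel h1.ne'
  have c2 : (m - x) * (-1 / (m - x)) = -1 := by field_simp
  rw [c1, c2]
  ring

lemma aux_log (m x : ℝ) (h1 : 0 < m + x) (h2 : 0 < m - x) :
    Real.log (m + x) + Real.log (m - x) ≤ 2 * Real.log m ∧
    2 * Real.log m - x ^ 2 / (m ^ 2 - x ^ 2) ≤ Real.log (m + x) + Real.log (m - x) := by
  have hm : 0 < m := by linarith
  have hp : 0 < m ^ 2 - x ^ 2 := by nlinarith [mul_pos h1 h2]
  have e1 : Real.log (m + x) + Real.log (m - x) = Real.log (m ^ 2 - x ^ 2) := by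
    rw [← Real.log_mul h1.ne' h2.ne']; congr 1; ring
  have e2 : 2 * Real.log m = Real.log (m ^ 2) := by rw [Real.log_pow]; norm_num
  rw [e1, e2]
  constructor
  · exact Real.log_le_log hp (by nlinarith [sq_nonneg x])
  · have := Real.log_le_sub_one_of_pos (x := m ^ 2 / (m ^ 2 - x ^ 2)) (by positivity)
    rw [Real.log_div (by positivity) hp.ne'] at this
    have e3 : m ^ 2 / (m ^ 2 - x ^ 2) - 1 = x ^ 2 / (m ^ 2 - x ^ 2) := by
      field_simp; ring
    linarith

lemma aux_upper (t : ℝ) (ht : 0 < t) :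
    (t + 1) * Real.log (t + 1) - t * Real.log t ≤ 1 + Real.log (t + 1/2) := by
  have key := aux_mono
    (fun x => (2 * (1 + Real.log (t + 1/2))) * x -
      (((t + 1/2) + x) * Real.log ((t + 1/2) + x) - ((t + 1/2) - x) * Real.log ((t + 1/2) - x)))
    (fun x => 2 * (1 + Real.log (t + 1/2)) * 1 -
      (Real.log ((t + 1/2) + x) + Real.log ((t + 1/2) - x) + 2))
    (fun x hx => ((hasDerivAt_id x).const_mul _).sub
      (aux_deriv (t + 1/2) x (by linarith [hx.1]) (by linarith [hx.2])))
    (fun x hx => by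
      have := (aux_log (t + 1/2) x (by linarith [hx.1]) (by linarith [hx.2])).1
      linarith)
  have e1 : t + 1/2 + 1/2 = t + 1 := by ring
  have e2 : t + 1/2 - 1/2 = t := by ring
  simp only [e1, e2, add_zero, sub_zero, mul_zero, sub_self] at key
  linarith

lemma aux_lower (t : ℝ) (ht : 0 < t) :
    1 + Real.log (t + 1/2) - 1 / (24 * (t * (t + 1))) ≤
      (t + 1) * Real.log (t + 1) - t * Real.log t := by
  have key := aux_mono
    (fun x => (((t + 1/2) + x) * Real.log ((t + 1/2) + x)
        - ((t + 1/2) - x) * Real.log ((t + 1/2) - x)) -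
      (2 * (1 + Real.log (t + 1/2))) * x + (1 / (3 * (t * (t + 1)))) * x ^ 3)
    (fun x => (Real.log ((t + 1/2) + x) + Real.log ((t + 1/2) - x) + 2) -
      2 * (1 + Real.log (t + 1/2)) * 1 + (1 / (3 * (t * (t + 1)))) * (((3:ℕ):ℝ) * x ^ (3-1)))
    (fun x hx => ((aux_deriv (t + 1/2) x (by linarith [hx.1]) (by linarith [hx.2])).sub
      ((hasDerivAt_id x).const_mul _)).add ((hasDerivAt_pow 3 x).const_mul _))
    (fun x hx => by
      have := (aux_log (t + 1/2) x (by linarith [hx.1]) (by linarith [hx.2])).2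
      have h2 : x ^ 2 / ((t + 1/2) ^ 2 - x ^ 2) ≤ x ^ 2 / (t * (t + 1)) := by
        apply div_le_div_of_nonneg_left (sq_nonneg x) (by positivity)
        nlinarith [hx.1, hx.2]
      have h3 : (1 / (3 * (t * (t + 1)))) * (((3:ℕ):ℝ) * x ^ (3-1)) = x ^ 2 / (t * (t + 1)) := by
        push_cast
        norm_num
        field_simp
      rw [h3]
      linarith)
  have e1 : t + 1/2 + 1/2 = t + 1 := by ring
  have e2 : t + 1/2 - 1/2 = t := by ring
  have e3 : 1 / (3 * (t * (t + 1))) * (1/2 : ℝ) ^ 3 = 1 / (24 * (t * (t + 1))) := by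
    field_simp; norm_num
  simp only [e1, e2, e3, add_zero, sub_zero, mul_zero, sub_self] at key
  norm_num at key ⊢
  linarith

lemma aux_small (t : ℝ) (ht : 0 < t) (h : t ≤ 19/100) :
    Real.exp 1 * t ≤ (t + 1) * Real.log (t + 1) - t * Real.log t := by
  have h1 : 2 * t / (t + 2) ≤ Real.log (1 + t) := Real.le_log_one_add_of_nonneg ht.le
  have h2 : Real.log (19/100) ≤ -(164/100) := by
    have : (41:ℝ) ≤ 25 * Real.log (100/19) := by
      have e : (25:ℝ) * Real.log (100/19) = Real.log ((100/19)^25) := by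
        rw [Real.log_pow]; norm_num
      rw [e, Real.le_log_iff_exp_le (by positivity)]
      have : Real.exp 41 = Real.exp 1 ^ 41 := by rw [← Real.exp_nat_mul]; norm_num
      rw [this]
      calc Real.exp 1 ^ 41 ≤ (2.7183:ℝ) ^ 41 := by
            gcongr; linarith [Real.exp_one_lt_d9]
        _ ≤ _ := by norm_num
    have e : Real.log (19/100) = - Real.log (100/19) := by
      rw [← Real.log_inv]; norm_num
    linarith
  have h3 : Real.log t ≤ Real.log (19/100) + (t / (19/100) - 1) := by
    have := Real.log_le_sub_one_of_pos (x := t / (19/100)) (by positivity)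
    rw [Real.log_div ht.ne' (by norm_num)] at this
    linarith
  have h4 : t * (1 + t / 2.2) ≤ (t + 1) * Real.log (t + 1) := by
    rw [add_comm 1 t] at h1
    refine le_trans ?_ (mul_le_mul_of_nonneg_left h1 (by linarith))
    have : (t + 1) * (2 * t / (t + 2)) = t * (1 + t / (t + 2)) := by field_simp; ring
    rw [this]
    have : t / 2.2 ≤ t / (t + 2) := by
      apply div_le_div_of_nonneg_left ht.le (by linarith) (by linarith)
    gcongr
  have h5 : Real.exp 1 ≤ (1 + t / 2.2) - Real.log t := by
    have := Real.exp_one_lt_d9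
    norm_num at this ⊢
    linarith
  nlinarith [mul_le_mul_of_nonneg_left h5 ht.le]

/-- **Lemma (basic entropy bounds).** For every real `t > 0`:
`e·(t + 1/2) ≥ (t+1)^{t+1}/t^t`,
`(t+1)^{t+1}/t^t ≥ e·(t + 1/2 − 1/(24t))`,
`(t+1)^{t+1}/t^t ≥ (e/t)^t`, and
`(t+1)^{t+1}/t^t ≥ e·t + 1`
(real powers: `x^y = exp(y·log x)` for `x > 0`). -/
theorem basic_entropy_bounds (t : ℝ) (ht : 0 < t) :
    (t + 1) ^ (t + 1) / t ^ t ≤ Real.exp 1 * (t + 1 / 2) ∧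
    Real.exp 1 * (t + 1 / 2 - 1 / (24 * t)) ≤ (t + 1) ^ (t + 1) / t ^ t ∧
    (Real.exp 1 / t) ^ t ≤ (t + 1) ^ (t + 1) / t ^ t ∧
    Real.exp 1 * t + 1 ≤ (t + 1) ^ (t + 1) / t ^ t := by
  have ht1 : 0 < t + 1 := by linarith
  have hm : 0 < t + 1/2 := by linarith
  have hF : (t + 1) ^ (t + 1) / t ^ t
      = Real.exp ((t + 1) * Real.log (t + 1) - t * Real.log t) := by
    rw [Real.rpow_def_of_pos ht1, Real.rpow_def_of_pos ht, ← Real.exp_sub]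
    congr 1; ring
  have he := Real.exp_pos 1
  have hlow : Real.exp 1 * ((t + 1/2) * (1 - 1 / (24 * (t * (t + 1))))) ≤
      Real.exp ((t + 1) * Real.log (t + 1) - t * Real.log t) := by
    refine le_trans ?_ (Real.exp_le_exp.2 (aux_lower t ht))
    rw [sub_eq_add_neg (1 + Real.log (t + 1/2)), Real.exp_add, Real.exp_add, Real.exp_log hm,
      mul_assoc]
    have := Real.add_one_le_exp (-(1 / (24 * (t * (t + 1)))))
    gcongr
    linarith
  refine ⟨?_, ?_, ?_, ?_⟩
  · rw [hF]
    refine (Real.exp_le_exp.2 (aux_upper t ht)).trans_eq ?_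
    rw [Real.exp_add, Real.exp_log hm]
  · rw [hF]
    refine le_trans ?_ hlow
    apply mul_le_mul_of_nonneg_left _ he.le
    have : (t + 1/2) * (1 / (24 * (t * (t + 1)))) ≤ 1 / (24 * t) := by
      rw [mul_one_div, div_le_div_iff₀ (by positivity) (by positivity)]
      nlinarith
    linarith
  · rw [Real.div_rpow he.le ht.le]
    gcongr
    rw [Real.rpow_def_of_pos ht1, ← Real.exp_mul, Real.exp_le_exp]
    have := Real.one_sub_inv_le_log_of_pos ht1
    have h2 := mul_le_mul_of_nonneg_right this ht1.le
    rw [sub_mul, inv_mul_cancel₀ ht1.ne'] at h2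
    linarith
  · rw [hF]
    rcases le_total t (19/100) with h | h
    · exact (Real.add_one_le_exp _).trans (Real.exp_le_exp.2 (aux_small t ht h))
    · refine le_trans ?_ hlow
      have h1 : (t + 1/2) * (1 / (24 * (t * (t + 1)))) ≤ 0.1272 := by
        rw [mul_one_div, div_le_iff₀ (by positivity)]
        norm_num
        nlinarith
      have h2 := Real.exp_one_gt_d9
      have h3 := mul_le_mul_of_nonneg_left h1 he.le
      have e : Real.exp 1 * ((t + 1/2) * (1 - 1 / (24 * (t * (t + 1))))) = Real.exp 1 * t +
        Real.exp 1 / 2 - Real.exp 1 * ((t + 1/2) * (1 / (24 * (t * (t + 1))))) := by ring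
      rw [e]
      linarith
end

section
/- Let n ≥ 2 and let t be an integer with t ≥ n³/2. Then (n−1)! · binom(t+n−1, binom(n,2)) · ∏_{i=1}^{n−2} C_i ≥ K_n(t, 0, …, 0, −t) ≥ binom(t+n−1, binom(n,2)) · ∏_{i=1}^{n−2} C_i. -/
open Finset

theorem flow_le {n : ℕ} {N : Fin (n + 1) → ℤ} {f : Fin (n + 1) → Fin (n + 1) → ℕ}
    (hf : IsIntFlow n N f) (i j : Fin (n + 1)) :
    (f i j : ℤ) ≤ |∑ a : Fin (n + 1), (a : ℤ) * N a| := by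
  obtain ⟨h0, h1⟩ := hf
  have key : ∑ a : Fin (n + 1), (a : ℤ) * N a =
      - ∑ a : Fin (n + 1), ∑ b : Fin (n + 1), (if a < b then ((b : ℤ) - a) * (f a b : ℤ) else 0) := by
    have : ∑ a : Fin (n + 1), (a : ℤ) * N a =
        ∑ a : Fin (n + 1), ∑ b : Fin (n + 1), (if a < b then (a : ℤ) * (f a b : ℤ) else 0) -
        ∑ a : Fin (n + 1), ∑ b : Fin (n + 1), (if b < a then (a : ℤ) * (f b a : ℤ) else 0) := by
      rw [← Finset.sum_sub_distrib]
      refine Finset.sum_congr rfl fun a _ => ?_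
      rw [← h1 a, mul_sub, Finset.mul_sum, Finset.mul_sum]
      simp only [mul_ite, mul_zero]
    rw [this]
    conv_lhs => rw [Finset.sum_comm (f := fun a b => (if b < a then ((a : Fin (n + 1)) : ℤ) * (f b a : ℤ) else 0))]
    rw [← Finset.sum_sub_distrib, ← Finset.sum_neg_distrib]
    refine Finset.sum_congr rfl fun a _ => ?_
    rw [← Finset.sum_sub_distrib, ← Finset.sum_neg_distrib]
    refine Finset.sum_congr rfl fun b _ => ?_
    split_ifs <;> ring
  by_cases hij : i < j
  · have nn : ∀ a b : Fin (n + 1), 0 ≤ (if a < b then ((b : ℤ) - a) * (f a b : ℤ) else 0) := by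
      intro a b
      split_ifs with h
      · have : (a : ℤ) < b := by exact_mod_cast h
        have := sub_pos.2 this
        positivity
      · exact le_rfl
    rw [key, abs_neg]
    refine le_trans ?_ (le_abs_self _)
    calc (f i j : ℤ) ≤ (if i < j then ((j : ℤ) - i) * (f i j : ℤ) else 0) := by
            rw [if_pos hij]
            have : (i : ℤ) < j := by exact_mod_cast hij
            nlinarith [Int.natCast_nonneg (f i j)]
      _ ≤ ∑ b, (if i < b then ((b : ℤ) - i) * (f i b : ℤ) else 0) :=
            Finset.single_le_sum (f := fun b => (if i < b then ((b : ℤ) - i) * (f i b : ℤ) else 0))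
              (fun b _ => nn i b) (Finset.mem_univ j)
      _ ≤ _ := Finset.single_le_sum
            (f := fun a => ∑ b, (if a < b then (((b : Fin (n+1)) : ℤ) - a) * (f a b : ℤ) else 0))
              (fun a _ => Finset.sum_nonneg fun b _ => nn a b) (Finset.mem_univ i)
  · rw [h0 i j hij]; simp

theorem flows_finite (n : ℕ) (N : Fin (n + 1) → ℤ) : {f | IsIntFlow n N f}.Finite := by
  set B := (|∑ a : Fin (n + 1), (a : ℤ) * N a|).toNat with hB
  refine Set.Finite.subset (Set.finite_Iic (fun _ _ => B : Fin (n + 1) → Fin (n + 1) → ℕ)) ?_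
  intro f hf
  refine Set.mem_Iic.2 fun i j => ?_
  have := flow_le hf i j
  have h2 := abs_nonneg (∑ a : Fin (n + 1), (a : ℤ) * N a)
  show f i j ≤ B
  omega

/-- The finset of integer flows. -/
noncomputable def flowSet (n : ℕ) (N : Fin (n + 1) → ℤ) :
    Finset (Fin (n + 1) → Fin (n + 1) → ℕ) := (flows_finite n N).toFinset

theorem mem_flowSet {n : ℕ} {N : Fin (n + 1) → ℤ} {f} :
    f ∈ flowSet n N ↔ IsIntFlow n N f := by simp [flowSet]

theorem Kn_eq_card (n : ℕ) (N : Fin (n + 1) → ℤ) : Kn n N = (flowSet n N).card := by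
  unfold Kn flowSet
  have := Nat.card_eq_card_finite_toFinset (flows_finite n N)
  rw [← this]; rfl

/-- Total flow on an edge over all flows. -/
noncomputable def Tn (n : ℕ) (i j : Fin (n + 1)) (N : Fin (n + 1) → ℤ) : ℤ :=
  ∑ f ∈ flowSet n N, (f i j : ℤ)

theorem flow_eq (n : ℕ) (N : Fin (n + 1) → ℤ) (i : Fin (n + 1)) :
    N i * (Kn n N : ℤ) = (∑ j, if i < j then Tn n i j N else 0) -
      ∑ k, if k < i then Tn n k i N else 0 := by
  have h : ∀ f ∈ flowSet n N, N i = (∑ j : Fin (n + 1), if i < j then (f i j : ℤ) else 0) -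
      (∑ k : Fin (n + 1), if k < i then (f k i : ℤ) else 0) :=
    fun f hf => ((mem_flowSet.1 hf).2 i).symm
  have : N i * (Kn n N : ℤ) = ∑ f ∈ flowSet n N, N i := by
    rw [Kn_eq_card]; simp [mul_comm]
  rw [this, Finset.sum_congr rfl h, Finset.sum_sub_distrib, Finset.sum_comm, Finset.sum_comm (s := flowSet n N)]
  congr 1
  · refine Finset.sum_congr rfl fun j _ => ?_
    split_ifs <;> simp [Tn]
  · refine Finset.sum_congr rfl fun j _ => ?_
    split_ifs <;> simp [Tn]

/-- Add `c` to the flow on edge `i → j`. -/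
def bump {n : ℕ} (i j : Fin (n + 1)) (f : Fin (n + 1) → Fin (n + 1) → ℕ) :
    Fin (n + 1) → Fin (n + 1) → ℕ :=
  fun a b => f a b + if a = i ∧ b = j then 1 else 0

theorem bump_flow {n : ℕ} {N : Fin (n + 1) → ℤ} {f : Fin (n + 1) → Fin (n + 1) → ℕ}
    {i j : Fin (n + 1)} (hij : i < j) :
    IsIntFlow n (N + Pi.single i 1 - Pi.single j 1) (bump i j f) ↔ IsIntFlow n N f := by
  unfold IsIntFlow bump
  refine and_congr ?_ ?_
  · refine forall_congr' fun a => forall_congr' fun b => imp_congr_right fun hab => ?_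
    have : ¬ (a = i ∧ b = j) := by rintro ⟨rfl, rfl⟩; exact hab hij
    simp [this]
  · refine forall_congr' fun a => ?_
    have h1 : (∑ b : Fin (n + 1), if a < b then
        (((f a b + if a = i ∧ b = j then 1 else 0 : ℕ)) : ℤ) else 0) =
        (∑ b : Fin (n + 1), if a < b then (f a b : ℤ) else 0) + (Pi.single i 1 : Fin (n+1) → ℤ) a := by
      have : (Pi.single i 1 : Fin (n+1) → ℤ) a = ∑ b : Fin (n + 1), if b = j then (if a = i then 1 else 0) else 0 := by
        simp [Pi.single_apply]
      rw [this, ← Finset.sum_add_distrib]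
      refine Finset.sum_congr rfl fun b _ => ?_
      by_cases ha : a = i <;> by_cases hb : b = j <;> simp [ha, hb, hij]
    have h2 : (∑ b : Fin (n + 1), if b < a then
        (((f b a + if b = i ∧ a = j then 1 else 0 : ℕ)) : ℤ) else 0) =
        (∑ b : Fin (n + 1), if b < a then (f b a : ℤ) else 0) + (Pi.single j 1 : Fin (n+1) → ℤ) a := by
      have : (Pi.single j 1 : Fin (n+1) → ℤ) a = ∑ b : Fin (n + 1), if b = i then (if a = j then 1 else 0) else 0 := by
        simp [Pi.single_apply]
      rw [this, ← Finset.sum_add_distrib]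
      refine Finset.sum_congr rfl fun b _ => ?_
      by_cases ha : a = j <;> by_cases hb : b = i <;> simp [ha, hb, hij]
    rw [h1, h2]
    simp only [Pi.add_apply, Pi.sub_apply]
    constructor <;> intro h <;> linarith

theorem bump_inj {n : ℕ} (i j : Fin (n + 1)) : Function.Injective (bump (n := n) i j) := by
  intro f g h
  funext a b
  have := congrFun (congrFun h a) b
  simpa [bump] using this

theorem Tn_shift {n : ℕ} (N : Fin (n + 1) → ℤ) {i j : Fin (n + 1)} (hij : i < j) :
    Tn n i j (N + Pi.single i 1 - Pi.single j 1) = Tn n i j N + Kn n N := by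
  have : Tn n i j N + Kn n N = ∑ f ∈ flowSet n N, ((f i j : ℤ) + 1) := by
    rw [Finset.sum_add_distrib, Kn_eq_card]; simp [Tn]
  rw [this]
  symm
  unfold Tn
  refine Finset.sum_of_injOn (bump i j) (bump_inj i j).injOn ?_ ?_ ?_
  · intro f hf
    exact mem_flowSet.2 ((bump_flow hij).2 (mem_flowSet.1 hf))
  · intro g hg hng
    by_contra hne
    apply hng
    have hpos : 1 ≤ g i j := by
      rcases Nat.eq_zero_or_pos (g i j) with h | h
      · simp [h] at hne
      · exact h
    have hb : bump i j (fun a b => g a b - if a = i ∧ b = j then 1 else 0) = g := by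
      funext a b
      simp only [bump]
      split_ifs with h
      · obtain ⟨rfl, rfl⟩ := h; omega
      · simp
    refine ⟨_, ?_, hb⟩
    rw [← hb] at hg
    exact mem_flowSet.2 ((bump_flow hij).1 (mem_flowSet.1 hg))
  · intro f hf
    simp [bump]

theorem Kn_mono_bump {n : ℕ} (N : Fin (n + 1) → ℤ) {i j : Fin (n + 1)} (hij : i < j) :
    Kn n N ≤ Kn n (N + Pi.single i 1 - Pi.single j 1) := by
  rw [Kn_eq_card, Kn_eq_card]
  refine Finset.card_le_card_of_injOn (bump i j) ?_ (bump_inj i j).injOn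
  intro f hf
  exact mem_flowSet.2 ((bump_flow hij).2 (mem_flowSet.1 hf))

/-- Deleting the first vertex. -/
theorem Kn_delete {n : ℕ} (N : Fin (n + 2) → ℤ) (t : ℕ) (h0 : N 0 = t) :
    Kn (n + 1) N = ∑ y ∈ Finset.piAntidiag (Finset.univ : Finset (Fin (n + 1))) t,
      Kn n (fun j => N j.succ + y j) := by
  have hiff : ∀ f : Fin (n + 2) → Fin (n + 2) → ℕ, IsIntFlow (n + 1) N f ↔
      ((∀ i, f i 0 = 0) ∧ (∑ j : Fin (n + 1), f 0 j.succ = t) ∧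
        IsIntFlow n (fun j => N j.succ + f 0 j.succ) (fun i j => f i.succ j.succ)) := by
    intro f
    unfold IsIntFlow
    constructor
    · rintro ⟨a, b⟩
      refine ⟨fun i => a i 0 (by simp), ?_, ?_, ?_⟩
      · have := b 0
        rw [h0, Fin.sum_univ_succ] at this
        simp at this
        exact_mod_cast this
      · intro i j hij
        exact a _ _ (by simpa using hij)
      · intro i
        have := b i.succ
        simp only [Fin.sum_univ_succ (n := n + 1)] at this
        simp at this
        simp
        linarith
    · rintro ⟨a, b, c, d⟩
      refine ⟨?_, ?_⟩
      · intro i j hij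
        rcases Fin.eq_zero_or_eq_succ j with rfl | ⟨j, rfl⟩
        · exact a i
        · rcases Fin.eq_zero_or_eq_succ i with rfl | ⟨i, rfl⟩
          · simp at hij
          · exact c i j (by simpa using hij)
      · intro i
        rcases Fin.eq_zero_or_eq_succ i with rfl | ⟨i, rfl⟩
        · rw [h0, Fin.sum_univ_succ]
          simp
          exact_mod_cast b
        · have := d i
          simp only [Fin.sum_univ_succ (n := n + 1)]
          simp at this
          simp
          linarith
  have hc : ∀ y : Fin (n + 1) → ℕ, Kn n (fun j => N j.succ + y j) =
      (flowSet n (fun j => N j.succ + y j)).card := fun y => Kn_eq_card _ _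
  rw [Kn_eq_card]
  simp only [hc]
  rw [← Finset.card_sigma]
  refine Finset.card_nbij' (fun f => ⟨fun j => f 0 j.succ, fun i j => f i.succ j.succ⟩)
    (fun p => Fin.cons (Fin.cons 0 p.1) (fun i => Fin.cons 0 (p.2 i))) ?_ ?_ ?_ ?_
  · intro f hf
    have := (hiff f).1 (mem_flowSet.1 hf)
    simp only [Finset.coe_sigma, Set.mem_sigma_iff, Finset.mem_coe, Finset.mem_piAntidiag, mem_flowSet]
    exact ⟨⟨this.2.1, by simp⟩, this.2.2⟩
  · rintro ⟨y, g⟩ hp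
    simp only [Finset.coe_sigma, Set.mem_sigma_iff, Finset.mem_coe, Finset.mem_piAntidiag, mem_flowSet] at hp
    refine mem_flowSet.2 ((hiff _).2 ⟨?_, ?_, ?_⟩)
    · intro i
      rcases Fin.eq_zero_or_eq_succ i with rfl | ⟨i, rfl⟩ <;> simp
    · simpa using hp.1.1
    · simpa using hp.2
  · intro f hf
    have := (hiff f).1 (mem_flowSet.1 hf)
    funext i j
    rcases Fin.eq_zero_or_eq_succ i with rfl | ⟨i, rfl⟩ <;>
    rcases Fin.eq_zero_or_eq_succ j with rfl | ⟨j, rfl⟩ <;> simp [this.1]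
  · rintro ⟨y, g⟩ hp
    simp

/-- Kostant partition function indexed by the netflow on the non-sink vertices. -/
noncomputable def kk (m : ℕ) (κ : Fin m → ℤ) : ℤ := (Kn m (extend m κ) : ℤ)

/-- Total flow on an inner edge. -/
noncomputable def tt (m : ℕ) (i j : Fin m) (κ : Fin m → ℤ) : ℤ :=
  Tn m i.castSucc j.castSucc (extend m κ)

/-- Total flow on an edge to the sink. -/
noncomputable def bb (m : ℕ) (i : Fin m) (κ : Fin m → ℤ) : ℤ :=
  Tn m i.castSucc (Fin.last m) (extend m κ)

theorem extend_castSucc {m : ℕ} (κ : Fin m → ℤ) (i : Fin m) :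
    extend m κ i.castSucc = κ i := by simp [extend]

theorem extend_last {m : ℕ} (κ : Fin m → ℤ) :
    extend m κ (Fin.last m) = -∑ i, κ i := by simp [extend]

theorem extend_add_single {m : ℕ} (κ : Fin m → ℤ) (i : Fin m) :
    extend m (κ + Pi.single i 1) =
      extend m κ + Pi.single i.castSucc 1 - Pi.single (Fin.last m) 1 := by
  funext a
  refine Fin.lastCases ?_ (fun a => ?_) a
  · have h : Fin.last m ≠ i.castSucc := (Fin.castSucc_lt_last i).ne'
    simp [extend_last, Finset.sum_add_distrib, Pi.single_apply, h]
    ring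
  · have h : a.castSucc ≠ Fin.last m := (Fin.castSucc_lt_last a).ne
    simp [extend_castSucc, Pi.single_apply, h]

theorem kk_eq (m : ℕ) (κ : Fin m → ℤ) (i : Fin m) :
    κ i * kk m κ = bb m i κ + (∑ j, if i < j then tt m i j κ else 0) -
      ∑ j, if j < i then tt m j i κ else 0 := by
  have := flow_eq m (extend m κ) i.castSucc
  rw [extend_castSucc] at this
  unfold kk bb tt
  rw [this]
  simp only [Fin.sum_univ_castSucc (n := m)]
  have h : ¬ Fin.last m < i.castSucc := not_lt.2 (Fin.le_last _)
  simp [h, Fin.castSucc_lt_last]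
  ring

theorem bb_shift (m : ℕ) (κ : Fin m → ℤ) (i : Fin m) :
    bb m i (κ + Pi.single i 1) = bb m i κ + kk m κ := by
  unfold bb kk
  rw [extend_add_single]
  exact Tn_shift _ (Fin.castSucc_lt_last i)

theorem tt_shift (m : ℕ) (κ : Fin m → ℤ) {i j : Fin m} (hij : i < j) :
    tt m i j (κ + Pi.single i 1) = tt m i j (κ + Pi.single j 1) + kk m (κ + Pi.single j 1) := by
  unfold tt kk
  rw [extend_add_single, extend_add_single]
  have := Tn_shift (extend m κ + Pi.single j.castSucc 1 - Pi.single (Fin.last m) 1)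
    (i := i.castSucc) (j := j.castSucc) (by simpa using hij)
  rw [← this]
  congr 1
  abel

theorem kk_mono_single (m : ℕ) (κ : Fin m → ℤ) (i : Fin m) :
    kk m κ ≤ kk m (κ + Pi.single i 1) := by
  unfold kk
  rw [extend_add_single]
  exact_mod_cast Kn_mono_bump _ (Fin.castSucc_lt_last i)

theorem kk_nonneg (m : ℕ) (κ : Fin m → ℤ) : 0 ≤ kk m κ := by unfold kk; positivity

theorem kk_mono_nat (m : ℕ) (κ : Fin m → ℤ) (c : Fin m → ℕ) :
    kk m κ ≤ kk m (fun i => κ i + c i) := by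
  generalize hs : ∑ i, c i = s
  induction s generalizing c with
  | zero =>
    have : ∀ i, c i = 0 := by simpa using hs
    simp [this]
  | succ s ih =>
    obtain ⟨i, hi⟩ : ∃ i, c i ≠ 0 := by
      by_contra! h
      simp [h] at hs
    have hc : c = (fun j => (c j - if j = i then 1 else 0)) + Pi.single i 1 := by
      funext j
      by_cases h : j = i
      · subst h; simp; omega
      · simp [h]
    set c' : Fin m → ℕ := fun j => (c j - if j = i then 1 else 0) with hc'
    have hs' : ∑ j, c' j = s := by
      rw [hc] at hs
      simp [Finset.sum_add_distrib, Pi.single_apply] at hs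
      exact hs
    refine (ih c' hs').trans ((kk_mono_single m _ i).trans (le_of_eq ?_))
    congr 1
    funext j
    rw [hc]
    by_cases h : j = i
    · subst h; simp; ring
    · simp [h]

theorem euler_rel (m : ℕ) (κ : Fin m → ℤ) :
    ∑ j : Fin m, (κ j + 1 - (j : ℤ)) * kk m (κ + Pi.single j 1) =
      (∑ j, κ j + m) * kk m κ := by
  have h1 : ∑ j : Fin m, ((κ j + 1) * kk m (κ + Pi.single j 1) - κ j * kk m κ) =
      m * kk m κ + ∑ j : Fin m, (j : ℤ) * kk m (κ + Pi.single j 1) := by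
    have e1 : ∀ j : Fin m, (κ j + 1) * kk m (κ + Pi.single j 1) - κ j * kk m κ =
        kk m κ + ((∑ l, if j < l then (tt m j l (κ + Pi.single j 1) - tt m j l κ) else 0) -
          ∑ l, if l < j then (tt m l j (κ + Pi.single j 1) - tt m l j κ) else 0) := by
      intro j
      have a := kk_eq m (κ + Pi.single j 1) j
      have b := kk_eq m κ j
      rw [bb_shift] at a
      simp only [Pi.add_apply, Pi.single_eq_same] at a
      rw [a, b]
      have c1 : (∑ l, if j < l then (tt m j l (κ + Pi.single j 1) - tt m j l κ) else 0) =
        (∑ l, if j < l then (tt m j l (κ + Pi.single j 1)) else 0) -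
        (∑ l, if j < l then (tt m j l κ) else 0) := by
        rw [← Finset.sum_sub_distrib]
        refine Finset.sum_congr rfl fun l _ => ?_
        split_ifs <;> simp
      have c2 : (∑ l, if l < j then (tt m l j (κ + Pi.single j 1) - tt m l j κ) else 0) =
        (∑ l, if l < j then (tt m l j (κ + Pi.single j 1)) else 0) -
        (∑ l, if l < j then (tt m l j κ) else 0) := by
        rw [← Finset.sum_sub_distrib]
        refine Finset.sum_congr rfl fun l _ => ?_
        split_ifs <;> simp
      rw [c1, c2]
      ring
    rw [Finset.sum_congr rfl fun j _ => e1 j, Finset.sum_add_distrib, Finset.sum_sub_distrib]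
    rw [Finset.sum_comm, ← Finset.sum_sub_distrib]
    congr 1
    · simp
    · refine Finset.sum_congr rfl fun l _ => ?_
      rw [← Finset.sum_sub_distrib]
      have : ∀ j : Fin m, ((if j < l then (tt m j l (κ + Pi.single j 1) - tt m j l κ) else 0) -
          if j < l then (tt m j l (κ + Pi.single l 1) - tt m j l κ) else 0) =
          if j < l then kk m (κ + Pi.single l 1) else 0 := by
        intro j
        split_ifs with h
        · rw [tt_shift m κ h]; ring
        · simp
      rw [Finset.sum_congr rfl fun j _ => this j, ← Finset.sum_filter, Finset.sum_const]
      have : (Finset.univ.filter fun j : Fin m => j < l) = Finset.Iio l := by ext; simp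
      rw [this, Fin.card_Iio]; simp
  rw [Finset.sum_sub_distrib, ← Finset.sum_mul] at h1
  have : ∑ j : Fin m, (κ j + 1 - (j : ℤ)) * kk m (κ + Pi.single j 1) =
    ∑ j : Fin m, (κ j + 1) * kk m (κ + Pi.single j 1) - ∑ j : Fin m, (j : ℤ) * kk m (κ + Pi.single j 1) := by
    rw [← Finset.sum_sub_distrib]
    exact Finset.sum_congr rfl fun j _ => by ring
  rw [this]
  linarith

/-- coefficient of `z^s` in `z^κ (1-z)^(ρ-κ-1)`. -/
noncomputable def gam (ρ κ s : ℕ) : ℤ :=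
  if κ ≤ s then Ring.choose ((s : ℤ) - ρ) (s - κ) else 0

theorem gam_rec (ρ κ s : ℕ) :
    ((s : ℤ) + 1 - κ) * gam ρ κ (s + 1) = ((s : ℤ) + 1 - ρ) * gam ρ κ s := by
  unfold gam
  by_cases h : κ ≤ s
  · have h' : κ ≤ s + 1 := by omega
    rw [if_pos h, if_pos h']
    have e := Ring.choose_add_smul_choose ((s : ℤ) - ρ) (s - κ) 1
    have e2 : s + 1 - κ = (s - κ) + 1 := by omega
    rw [e2]
    simp only [Nat.choose_one_right, Ring.choose_one_right, nsmul_eq_mul] at e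
    push_cast at e ⊢
    rw [Nat.cast_sub h] at e
    rw [show (s : ℤ) + 1 - κ = s - κ + 1 by ring, show (s : ℤ) + 1 - ρ = s - ρ + 1 by ring, e]
  · rw [if_neg h]
    split_ifs with h'
    · have : κ = s + 1 := by omega
      subst this; simp
    · simp

theorem gam_self (ρ κ : ℕ) : gam ρ κ κ = 1 := by simp [gam]

theorem gam_lt {ρ κ s : ℕ} (h : s < κ) : gam ρ κ s = 0 := by
  simp [gam, not_le.2 h]

theorem gam_sum (ρ s : ℕ) :
    ∑ κ ∈ Finset.range (ρ + 1), (ρ.choose κ : ℤ) * gam ρ κ s = 1 := by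
  have e := Ring.add_choose_eq (r := (ρ : ℤ)) (s := (s : ℤ) - ρ) s (Commute.all _ _)
  rw [show (ρ : ℤ) + (s - ρ) = s by ring, Ring.choose_natCast, Nat.choose_self,
    Finset.Nat.sum_antidiagonal_eq_sum_range_succ_mk] at e
  simp only [Ring.choose_natCast] at e
  have h1 : ∑ κ ∈ Finset.range (ρ + 1), (ρ.choose κ : ℤ) * gam ρ κ s =
      ∑ κ ∈ Finset.range (ρ + s + 1), (ρ.choose κ : ℤ) * gam ρ κ s := by
    refine Finset.sum_subset (Finset.range_subset_range.2 (by omega)) ?_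
    intro x _ hx
    rw [Nat.choose_eq_zero_of_lt (by simpa using hx)]; simp
  have h2 : ∑ κ ∈ Finset.range (s + 1), (ρ.choose κ : ℤ) * gam ρ κ s =
      ∑ κ ∈ Finset.range (ρ + s + 1), (ρ.choose κ : ℤ) * gam ρ κ s := by
    refine Finset.sum_subset (Finset.range_subset_range.2 (by omega)) ?_
    intro x _ hx
    rw [gam_lt (by simpa using hx)]; simp
  rw [h1, ← h2]
  push_cast at e
  rw [e]
  refine Finset.sum_congr rfl fun x hx => ?_
  simp [gam, Nat.lt_succ_iff.1 (Finset.mem_range.1 hx)]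

/-- The indegree vector, with slack coordinate `0`. -/
def rho (m : ℕ) (j : Fin (m + 1)) : ℕ := if (j : ℕ) = m then 0 else j

/-- `kk` of the initial segment of a vector of naturals. -/
noncomputable def ki (m : ℕ) (y : Fin (m + 1) → ℕ) : ℤ := kk m (fun i => (y i.castSucc : ℤ))

theorem ki_rel (m : ℕ) (y : Fin (m + 1) → ℕ) :
    ∑ j, ((y j : ℤ) + 1 - rho m j) * ki m (y + Pi.single j 1) = (∑ j, (y j : ℤ) + m + 1) * ki m y := by
  rw [Fin.sum_univ_castSucc, Fin.sum_univ_castSucc (f := fun j => (y j : ℤ))]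
  have h1 : ki m (y + Pi.single (Fin.last m) 1) = ki m y := by
    unfold ki; congr 1; funext i
    have h : i.castSucc ≠ Fin.last m := (Fin.castSucc_lt_last i).ne
    simp [Pi.single_apply, h]
  have h2 : ∀ j : Fin m, ki m (y + Pi.single j.castSucc 1) =
      kk m ((fun i => (y i.castSucc : ℤ)) + Pi.single j 1) := by
    intro j
    unfold ki; congr 1; funext i
    simp [Pi.single_apply]
  have h3 : ∀ j : Fin m, (rho m j.castSucc : ℤ) = j := by
    intro j; simp [rho, j.2.ne]
  have h4 : (rho m (Fin.last m) : ℤ) = 0 := by simp [rho]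
  simp only [h1, h2, h3, h4]
  rw [euler_rel m (fun i => (y i.castSucc : ℤ))]
  unfold ki
  ring

/-- Weighted slice sum. -/
noncomputable def lam (m : ℕ) (t : ℕ) (g : (Fin (m + 1) → ℕ) → ℤ) : ℤ :=
  ∑ y ∈ Finset.piAntidiag (Finset.univ : Finset (Fin (m + 1))) t, g y * ki m y

/-- The product weight. -/
noncomputable def gg (m : ℕ) (κ y : Fin (m + 1) → ℕ) : ℤ := ∏ j, gam (rho m j) (κ j) (y j)

theorem gg_rec (m : ℕ) (κ y : Fin (m + 1) → ℕ) (j : Fin (m + 1)) :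
    ((y j : ℤ) + 1 - κ j) * gg m κ (y + Pi.single j 1) =
      ((y j : ℤ) + 1 - rho m j) * gg m κ y := by
  unfold gg
  rw [← Finset.mul_prod_erase _ _ (Finset.mem_univ j),
    ← Finset.mul_prod_erase _ (fun i => gam (rho m i) (κ i) (y i)) (Finset.mem_univ j)]
  rw [← mul_assoc, ← mul_assoc]
  congr 1
  · simpa using gam_rec (rho m j) (κ j) (y j)
  · refine Finset.prod_congr rfl fun i hi => ?_
    have : i ≠ j := (Finset.mem_erase.1 hi).1
    simp [Pi.single_apply, this]

theorem lam_step (m t : ℕ) (κ : Fin (m + 1) → ℕ) :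
    ((t : ℤ) + 1 - ∑ j, (κ j : ℤ)) * lam m (t + 1) (gg m κ) =
      ((t : ℤ) + m + 1) * lam m t (gg m κ) := by
  have key : ∀ j : Fin (m + 1),
      ∑ s ∈ Finset.piAntidiag (Finset.univ : Finset (Fin (m + 1))) (t + 1),
        ((s j : ℤ) - κ j) * gg m κ s * ki m s =
      ∑ y ∈ Finset.piAntidiag (Finset.univ : Finset (Fin (m + 1))) t,
        ((y j : ℤ) + 1 - rho m j) * gg m κ y * ki m (y + Pi.single j 1) := by
    intro j
    symm
    refine Finset.sum_of_injOn (fun y => y + Pi.single j 1) (add_left_injective _).injOn ?_ ?_ ?_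
    · intro y hy
      simp only [Finset.mem_coe, Finset.mem_piAntidiag] at hy ⊢
      refine ⟨?_, by simp⟩
      simp [Finset.sum_add_distrib, hy.1]
    · intro s hs hns
      by_cases h0 : s j = 0
      · by_cases hk : κ j = 0
        · simp [h0, hk]
        · have : gg m κ s = 0 := Finset.prod_eq_zero (Finset.mem_univ j) (gam_lt (by omega))
          simp [this]
      · exfalso
        apply hns
        have he : (fun i => s i - (Pi.single j 1 : Fin (m + 1) → ℕ) i) + Pi.single j 1 = s := by
          funext i
          by_cases h : i = j
          · subst h; simp; omega
          · simp [Pi.single_apply, h]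
        refine ⟨_, ?_, he⟩
        have hs' := (Finset.mem_piAntidiag.1 hs).1
        rw [← he] at hs'
        simp [Finset.sum_add_distrib] at hs'
        simp only [Finset.mem_coe, Finset.mem_piAntidiag]
        exact ⟨by simpa using hs', by simp⟩
    · intro y hy
      have := gg_rec m κ y j
      simp only [Pi.add_apply, Pi.single_eq_same]
      push_cast
      rw [← this]
  have l1 : ((t : ℤ) + 1 - ∑ j, (κ j : ℤ)) * lam m (t + 1) (gg m κ) =
      ∑ s ∈ Finset.piAntidiag (Finset.univ : Finset (Fin (m + 1))) (t + 1),
        ∑ j, ((s j : ℤ) - κ j) * gg m κ s * ki m s := by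
    unfold lam
    rw [Finset.mul_sum]
    refine Finset.sum_congr rfl fun s hs => ?_
    have hs' := (Finset.mem_piAntidiag.1 hs).1
    simp only [mul_assoc]
    rw [← Finset.sum_mul, Finset.sum_sub_distrib]
    congr 2
    exact_mod_cast hs'.symm
  rw [l1, Finset.sum_comm, Finset.sum_congr rfl fun j _ => key j, Finset.sum_comm]
  unfold lam
  rw [Finset.mul_sum]
  refine Finset.sum_congr rfl fun y hy => ?_
  have hy' := (Finset.mem_piAntidiag.1 hy).1
  have hy2 : ∑ j, (y j : ℤ) = t := by exact_mod_cast hy'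
  have := ki_rel m y
  rw [hy2] at this
  calc ∑ j, ((y j : ℤ) + 1 - rho m j) * gg m κ y * ki m (y + Pi.single j 1)
      = gg m κ y * ∑ j, ((y j : ℤ) + 1 - rho m j) * ki m (y + Pi.single j 1) := by
        rw [Finset.mul_sum]; exact Finset.sum_congr rfl fun j _ => by ring
    _ = _ := by rw [this]; ring

theorem gg_zero {m : ℕ} {κ y : Fin (m + 1) → ℕ} (h : ∑ j, y j ≤ ∑ j, κ j) (hne : y ≠ κ) :
    gg m κ y = 0 := by
  obtain ⟨j, hj⟩ : ∃ j, y j < κ j := by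
    by_contra! hc
    apply hne
    have := (Finset.sum_eq_sum_iff_of_le (fun i _ => hc i)).1
      (le_antisymm (Finset.sum_le_sum fun i _ => hc i) h)
    funext i
    exact (this i (Finset.mem_univ i)).symm
  exact Finset.prod_eq_zero (Finset.mem_univ j) (gam_lt hj)

theorem lam_gg (m t : ℕ) (κ : Fin (m + 1) → ℕ) :
    lam m t (gg m κ) = ((t + m).choose (∑ j, κ j + m) : ℤ) * ki m κ := by
  rcases lt_or_ge t (∑ j, κ j) with h | h
  · rw [Nat.choose_eq_zero_of_lt (by omega)]
    simp only [Nat.cast_zero, zero_mul]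
    refine Finset.sum_eq_zero fun y hy => ?_
    have hy' : ∑ j, y j = t := (Finset.mem_piAntidiag.1 hy).1
    rw [gg_zero (by omega) (by rintro rfl; omega)]; simp
  · induction t, h using Nat.le_induction with
    | base =>
      rw [Nat.choose_self]
      unfold lam
      rw [Finset.sum_eq_single κ]
      · simp [gg, gam_self]
      · intro y hy hne
        have hy' : ∑ j, y j = ∑ j, κ j := (Finset.mem_piAntidiag.1 hy).1
        rw [gg_zero (by omega) hne]; simp
      · intro hh
        exact absurd (Finset.mem_piAntidiag.2 ⟨rfl, by simp⟩) hh
    | succ t ht ih =>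
      have st := lam_step m t κ
      rw [ih] at st
      have hc := Nat.choose_mul_succ_eq (t + m) (∑ j, κ j + m)
      have e : t + m + 1 - (∑ j, κ j + m) = t + 1 - ∑ j, κ j := by omega
      rw [e] at hc
      have hc' : ((t + m).choose (∑ j, κ j + m) : ℤ) * (t + m + 1) =
          ((t + 1 + m).choose (∑ j, κ j + m) : ℤ) * ((t : ℤ) + 1 - ∑ j, (κ j : ℤ)) := by
        have := congrArg (Nat.cast (R := ℤ)) hc
        rw [show t + 1 + m = t + m + 1 by ring]
        push_cast [Nat.cast_sub (show ∑ j, κ j ≤ t + 1 by omega)] at this ⊢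
        exact this
      have hne : (t : ℤ) + 1 - ∑ j, (κ j : ℤ) ≠ 0 := by
        have : ((∑ j, κ j : ℕ) : ℤ) ≤ t := by exact_mod_cast ht
        push_cast at this
        intro h0
        linarith
      apply mul_left_cancel₀ hne
      rw [st]
      linear_combination ki m κ * hc'

theorem lidskii (m t : ℕ) :
    lam m t (fun _ => 1) = ∑ κ ∈ Fintype.piFinset (fun j => Finset.range (rho m j + 1)),
      (∏ j, ((rho m j).choose (κ j) : ℤ)) * (((t + m).choose (∑ j, κ j + m) : ℤ) * ki m κ) := by
  simp only [← lam_gg]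
  unfold lam
  simp only [Finset.mul_sum]
  rw [Finset.sum_comm]
  refine Finset.sum_congr rfl fun y _ => ?_
  simp only [← mul_assoc]
  rw [← Finset.sum_mul]
  congr 1
  have : ∀ κ : Fin (m + 1) → ℕ, (∏ j, ((rho m j).choose (κ j) : ℤ)) * gg m κ y =
      ∏ j, (((rho m j).choose (κ j) : ℤ) * gam (rho m j) (κ j) (y j)) := by
    intro κ; rw [gg, Finset.prod_mul_distrib]
  simp only [this]
  have e := Finset.prod_univ_sum (fun j => Finset.range (rho m j + 1))
    (fun j k => ((rho m j).choose k : ℤ) * gam (rho m j) k (y j))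
  rw [← e]
  simp [gam_sum]

theorem Kn_eq_lam (m t : ℕ) :
    (Kn (m + 1) (fun i => if (i : ℕ) = 0 then (t : ℤ) else if (i : ℕ) = m + 1 then -(t : ℤ) else 0) : ℤ)
      = lam m t (fun _ => 1) := by
  rw [Kn_delete _ t (by simp)]
  push_cast
  unfold lam
  refine Finset.sum_congr rfl fun y hy => ?_
  have hy' := (Finset.mem_piAntidiag.1 hy).1
  rw [one_mul, ki, kk]
  congr 2
  funext j
  refine Fin.lastCases ?_ (fun j => ?_) j
  · rw [extend_last, ← hy', Fin.sum_univ_castSucc]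
    simp
  · rw [extend_castSucc]
    simp [j.2.ne]

/-- the value at `rho`. -/
noncomputable def zz (m : ℕ) : ℤ := ki m (rho m)

theorem sum_rho (m : ℕ) : ∑ j, rho m j = m.choose 2 := by
  rw [Fin.sum_univ_castSucc]
  have h3 : ∀ j : Fin m, rho m j.castSucc = j := by
    intro j; simp [rho, j.2.ne]
  have h4 : rho m (Fin.last m) = 0 := by simp [rho]
  simp only [h3, h4, add_zero]
  rw [Fin.sum_univ_eq_sum_range (fun i => i), Finset.sum_range_id, Nat.choose_two_right]

theorem lower (m t : ℕ) : ((t + m).choose (m.choose 2 + m) : ℤ) * zz m ≤ lam m t (fun _ => 1) := by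
  rw [lidskii]
  have := Finset.single_le_sum (s := Fintype.piFinset (fun j => Finset.range (rho m j + 1)))
    (f := fun κ => (∏ j, ((rho m j).choose (κ j) : ℤ)) * (((t + m).choose (∑ j, κ j + m) : ℤ) * ki m κ))
    (a := rho m) ?_ ?_
  · simpa [sum_rho, zz] using this
  · intro κ _
    have := kk_nonneg m (fun i => (κ i.castSucc : ℤ))
    unfold ki
    positivity
  · simp

theorem vandermonde (m t : ℕ) :
    ∑ κ ∈ Fintype.piFinset (fun j => Finset.range (rho m j + 1)),
      (∏ j, ((rho m j).choose (κ j))) * (((t + m).choose (∑ j, κ j + m))) =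
    (t + (m.choose 2 + m)).choose (m.choose 2 + m) := by
  open Polynomial in
  have h1 : ∀ k : ℕ, (t + m).choose (k + m) = ((X : ℕ[X]) ^ k * (1 + X) ^ (t + m)).coeff t := by
    intro k
    rw [mul_comm, coeff_mul_X_pow', coeff_one_add_X_pow]
    split_ifs with h
    · rw [← Nat.choose_symm (by omega)]
      simp; congr 1; omega
    · rw [Nat.choose_eq_zero_of_lt (by omega)]
  open Polynomial in
  have h2 : ∑ κ ∈ Fintype.piFinset (fun j => Finset.range (rho m j + 1)),
      (∏ j, (((rho m j).choose (κ j) : ℕ[X]) * X ^ (κ j))) = (1 + X) ^ (m.choose 2) := by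
    have e := Finset.prod_univ_sum (fun j => Finset.range (rho m j + 1))
      (fun j k => ((rho m j).choose k : ℕ[X]) * X ^ k)
    rw [← e, ← sum_rho m, ← Finset.prod_pow_eq_pow_sum]
    refine Finset.prod_congr rfl fun j _ => ?_
    rw [add_comm (1 : ℕ[X]), add_pow]
    refine Finset.sum_congr rfl fun k _ => ?_
    simp [mul_comm]
  open Polynomial in
  calc _ = ((∑ κ ∈ Fintype.piFinset (fun j => Finset.range (rho m j + 1)),
      (∏ j, (((rho m j).choose (κ j) : ℕ[X]) * X ^ (κ j)))) * (1 + X) ^ (t + m)).coeff t := by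
        rw [Finset.sum_mul, finsetSum_coeff]
        refine Finset.sum_congr rfl fun κ _ => ?_
        rw [h1, Finset.prod_mul_distrib, Finset.prod_pow_eq_pow_sum, mul_assoc,
          ← Nat.cast_prod, ← Polynomial.C_eq_natCast, coeff_C_mul]
        simp
    _ = _ := by
        rw [h2, ← pow_add, coeff_one_add_X_pow, ← Nat.choose_symm (by omega)]
        simp; congr 1 <;> omega

theorem upper (m t : ℕ) : lam m t (fun _ => 1) ≤
    ((t + (m.choose 2 + m)).choose (m.choose 2 + m) : ℤ) * zz m := by
  rw [lidskii, ← vandermonde]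
  push_cast
  rw [Finset.sum_mul]
  refine Finset.sum_le_sum fun κ hκ => ?_
  have hκ' : ∀ j, κ j ≤ rho m j := by
    intro j
    have := Fintype.mem_piFinset.1 hκ j
    simpa [Nat.lt_succ_iff] using this
  have hle : ki m κ ≤ zz m := by
    have := kk_mono_nat m (fun i => (κ i.castSucc : ℤ)) (fun i => rho m i.castSucc - κ i.castSucc)
    refine this.trans (le_of_eq ?_)
    unfold zz ki
    congr 1
    funext i
    have := hκ' i.castSucc
    push_cast [Nat.cast_sub this]
    ring
  rw [← mul_assoc]
  exact mul_le_mul_of_nonneg_left hle (by positivity)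

theorem sum_insert_reindex {r : ℕ} (i : Fin r) (H : Finset (Fin r) → ℤ) :
    ∑ S, (if i ∉ S then H (insert i S) else 0) = ∑ U, (if i ∈ U then H U else 0) := by
  rw [← Finset.sum_filter, ← Finset.sum_filter]
  refine Finset.sum_nbij' (fun S => insert i S) (fun U => U.erase i) ?_ ?_ ?_ ?_ ?_
  · intro S _; simp
  · intro U _; simp
  · intro S hS
    exact Finset.erase_insert (by simpa using hS)
  · intro U hU
    exact Finset.insert_erase (by simpa using hU)
  · intro S _; rfl

theorem sum_split {r : ℕ} (i : Fin r) (G : Finset (Fin r) → ℤ) :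
    ∑ S, G S = ∑ S, (if i ∉ S then G S + G (insert i S) else 0) := by
  have h : ∀ S : Finset (Fin r), (if i ∉ S then G S + G (insert i S) else 0) =
      (if i ∉ S then G S else 0) + (if i ∉ S then G (insert i S) else 0) := by
    intro S; split_ifs <;> simp
  simp only [h]
  rw [Finset.sum_add_distrib, sum_insert_reindex, ← Finset.sum_add_distrib]
  refine Finset.sum_congr rfl fun S _ => ?_
  by_cases h : i ∈ S <;> simp [h]

theorem sum_split2 {r : ℕ} {i j : Fin r} (hij : i ≠ j) (G : Finset (Fin r) → ℤ) :
    ∑ S, G S = ∑ S, (if i ∉ S ∧ j ∉ S then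
      G S + G (insert i S) + G (insert j S) + G (insert i (insert j S)) else 0) := by
  rw [sum_split i, sum_split j]
  refine Finset.sum_congr rfl fun S _ => ?_
  by_cases h1 : i ∈ S <;> by_cases h2 : j ∈ S <;> simp [h1, h2, hij]
  ring

theorem pair_lemma {r : ℕ} {i j : Fin r} (hij : i ≠ j) (w : ℕ → ℤ)
    (φ τ : Finset (Fin r) → ℤ)
    (hτ : ∀ R, i ∉ R → j ∉ R → τ (insert j R) = τ (insert i R) + φ (insert i R)) :
    ∑ S, (if i ∉ S then w S.card * (τ S - τ (insert i S)) else 0) -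
      ∑ S, (if j ∉ S then w S.card * (τ S - τ (insert j S)) else 0) =
    ∑ U, (if i ∈ U ∧ j ∉ U then (w (U.card - 1) + w U.card) * φ U else 0) := by
  rw [← Finset.sum_sub_distrib, sum_split2 hij, sum_split2 hij (fun U =>
    (if i ∈ U ∧ j ∉ U then (w (U.card - 1) + w U.card) * φ U else 0))]
  refine Finset.sum_congr rfl fun S _ => ?_
  by_cases h : i ∉ S ∧ j ∉ S
  · rw [if_pos h, if_pos h]
    obtain ⟨h1, h2⟩ := h
    have h3 := hτ S h1 h2
    have e : insert j (insert i S) = insert i (insert j S) := Finset.insert_comm _ _ _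
    simp [h1, h2, hij, hij.symm, e, h3]
    ring
  · rw [if_neg h, if_neg h]

theorem inv_lemma {r : ℕ} (U : Finset (Fin r)) :
    2 * (∑ j : Fin r, (if j ∉ U then ((j : ℤ) + 1) else 0) -
      ∑ i : Fin r, ∑ j : Fin r, (if i < j then (if i ∈ U ∧ j ∉ U then (1 : ℤ) else 0) else 0)) =
    ((r : ℤ) - U.card) * ((r : ℤ) - U.card + 1) := by
  have hc : ∑ j : Fin r, (if j ∉ U then (1 : ℤ) else 0) = (r : ℤ) - U.card := by
    have : ∀ j : Fin r, (if j ∉ U then (1 : ℤ) else 0) = 1 - if j ∈ U then 1 else 0 := by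
      intro j; by_cases h : j ∈ U <;> simp [h]
    simp only [this, Finset.sum_sub_distrib]
    simp
  have hj : ∀ j : Fin r, ((j : ℤ)) = ∑ i : Fin r, if i < j then (1 : ℤ) else 0 := by
    intro j
    rw [← Finset.sum_filter]
    have : (Finset.univ.filter fun i : Fin r => i < j) = Finset.Iio j := by ext; simp
    rw [this]; simp
  set Q := ∑ i : Fin r, ∑ j : Fin r, (if i < j then (if i ∉ U ∧ j ∉ U then (1 : ℤ) else 0) else 0) with hQ
  have e1 : ∑ j : Fin r, (if j ∉ U then ((j : ℤ) + 1) else 0) -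
      ∑ i : Fin r, ∑ j : Fin r, (if i < j then (if i ∈ U ∧ j ∉ U then (1 : ℤ) else 0) else 0) =
      ((r : ℤ) - U.card) + Q := by
    have : ∑ j : Fin r, (if j ∉ U then ((j : ℤ) + 1) else 0) =
        ∑ j : Fin r, (if j ∉ U then (1 : ℤ) else 0) +
        ∑ j : Fin r, ∑ i : Fin r, (if i < j then (if j ∉ U then (1 : ℤ) else 0) else 0) := by
      rw [← Finset.sum_add_distrib]
      refine Finset.sum_congr rfl fun j _ => ?_
      by_cases h : j ∈ U
      · simp [h]
      · simp only [h, not_false_eq_true, if_true]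
        rw [hj j, add_comm]
    rw [this, hc, Finset.sum_comm, hQ, add_sub_assoc, ← Finset.sum_sub_distrib]
    congr 1
    refine Finset.sum_congr rfl fun i _ => ?_
    rw [← Finset.sum_sub_distrib]
    refine Finset.sum_congr rfl fun j _ => ?_
    by_cases h1 : i < j <;> by_cases h2 : i ∈ U <;> by_cases h3 : j ∈ U <;> simp [h1, h2, h3]
  have e2 : Q + Q + ((r : ℤ) - U.card) = ((r : ℤ) - U.card) * ((r : ℤ) - U.card) := by
    conv_lhs =>
      congr
      · congr
        · skip
        · rw [hQ, Finset.sum_comm]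
      · rw [← hc]
    conv_rhs => rw [← hc, Finset.sum_mul_sum]
    rw [hQ, ← Finset.sum_add_distrib, ← Finset.sum_add_distrib]
    refine Finset.sum_congr rfl fun i _ => ?_
    have : (if i ∉ U then (1 : ℤ) else 0) = ∑ j : Fin r, if j = i then (if i ∉ U then (1 : ℤ) else 0) else 0 := by
      simp
    conv_lhs => rw [this]
    rw [← Finset.sum_add_distrib, ← Finset.sum_add_distrib]
    refine Finset.sum_congr rfl fun j _ => ?_
    rcases lt_trichotomy i j with h | h | h
    · have h' := h.not_gt
      have h'' := h.ne'
      by_cases h2 : i ∈ U <;> by_cases h3 : j ∈ U <;> simp [h, h', h'', h2, h3]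
    · subst h
      by_cases h2 : i ∈ U <;> simp [h2]
    · have h' := h.not_gt
      have h'' := h.ne
      by_cases h2 : i ∈ U <;> by_cases h3 : j ∈ U <;> simp [h, h', h'', h2, h3]
  rw [e1]
  linear_combination e2

theorem aomoto_abs {r : ℕ} (w : ℕ → ℤ) (φ : Finset (Fin r) → ℤ)
    (β : Fin r → Finset (Fin r) → ℤ) (τ : Fin r → Fin r → Finset (Fin r) → ℤ)
    (hE : ∀ (i : Fin r) (S : Finset (Fin r)), ((i : ℤ) + 1 - if i ∈ S then 1 else 0) * φ S = β i S +
      (∑ j, if i < j then τ i j S else 0) - ∑ j, if j < i then τ j i S else 0)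
    (hβ : ∀ i S, i ∉ S → β i S = β i (insert i S) + φ (insert i S))
    (hτ : ∀ i j, i < j → ∀ R, i ∉ R → j ∉ R →
      τ i j (insert j R) = τ i j (insert i R) + φ (insert i R)) :
    ∑ U, φ U * (w U.card * (((r : ℤ) - U.card) * ((r : ℤ) - U.card + 1)) -
      w (U.card - 1) * ((r : ℤ) * (r + 1) - ((r : ℤ) - U.card) * ((r : ℤ) - U.card + 1))) = 0 := by
  have step1 : ∀ i : Fin r, ∀ S, i ∉ S →
      ((i : ℤ) + 1) * (φ S - φ (insert i S)) =
      (∑ j, if i < j then (τ i j S - τ i j (insert i S)) else 0) -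
       ∑ j, if j < i then (τ j i S - τ j i (insert i S)) else 0 := by
    intro i S hi
    have a := hE i S
    have b := hE i (insert i S)
    rw [hβ i S hi] at a
    simp only [hi, Finset.mem_insert_self, if_true, if_false] at a b
    have c1 : (∑ j, if i < j then (τ i j S - τ i j (insert i S)) else 0) =
        (∑ j, if i < j then τ i j S else 0) - ∑ j, if i < j then τ i j (insert i S) else 0 := by
      rw [← Finset.sum_sub_distrib]
      exact Finset.sum_congr rfl fun j _ => by split_ifs <;> simp
    have c2 : (∑ j, if j < i then (τ j i S - τ j i (insert i S)) else 0) =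
        (∑ j, if j < i then τ j i S else 0) - ∑ j, if j < i then τ j i (insert i S) else 0 := by
      rw [← Finset.sum_sub_distrib]
      exact Finset.sum_congr rfl fun j _ => by split_ifs <;> simp
    rw [c1, c2]
    linear_combination a - b
  -- the summed left side
  have step2 : ∑ i : Fin r, ∑ S, (if i ∉ S then w S.card * (((i : ℤ) + 1) * (φ S - φ (insert i S))) else 0)
      = ∑ i : Fin r, ∑ j : Fin r, (if i < j then
          ∑ U, (if i ∈ U ∧ j ∉ U then (w (U.card - 1) + w U.card) * φ U else 0) else 0) := by
    have e1 : ∀ i : Fin r, ∑ S, (if i ∉ S then w S.card * (((i : ℤ) + 1) * (φ S - φ (insert i S))) else 0)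
        = ∑ j, (if i < j then ∑ S, (if i ∉ S then w S.card * (τ i j S - τ i j (insert i S)) else 0) else 0)
        - ∑ j, (if j < i then ∑ S, (if i ∉ S then w S.card * (τ j i S - τ j i (insert i S)) else 0) else 0) := by
      intro i
      have x1 : ∀ j : Fin r, (if i < j then ∑ S, (if i ∉ S then w S.card * (τ i j S - τ i j (insert i S)) else 0) else 0)
          = ∑ S, (if i ∉ S then w S.card * (if i < j then (τ i j S - τ i j (insert i S)) else 0) else 0) := by
        intro j; split_ifs <;> simp
      have x2 : ∀ j : Fin r, (if j < i then ∑ S, (if i ∉ S then w S.card * (τ j i S - τ j i (insert i S)) else 0) else 0)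
          = ∑ S, (if i ∉ S then w S.card * (if j < i then (τ j i S - τ j i (insert i S)) else 0) else 0) := by
        intro j; split_ifs <;> simp
      simp only [x1, x2]
      rw [Finset.sum_comm, Finset.sum_comm (s := (Finset.univ : Finset (Fin r))), ← Finset.sum_sub_distrib]
      refine Finset.sum_congr rfl fun S _ => ?_
      by_cases hi : i ∈ S
      · simp [hi]
      · simp only [hi, not_false_eq_true, if_true]
        rw [step1 i S hi, ← Finset.mul_sum, ← Finset.mul_sum, mul_sub]
    rw [Finset.sum_congr rfl fun i _ => e1 i, Finset.sum_sub_distrib]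
    conv_lhs =>
      congr
      · skip
      · rw [Finset.sum_comm]
    rw [← Finset.sum_sub_distrib]
    refine Finset.sum_congr rfl fun i _ => ?_
    rw [← Finset.sum_sub_distrib]
    refine Finset.sum_congr rfl fun j _ => ?_
    split_ifs with h
    · exact pair_lemma h.ne w φ (τ i j) (hτ i j h)
    · simp
  have step3 : ∑ i : Fin r, ∑ S, (if i ∉ S then w S.card * (((i : ℤ) + 1) * (φ S - φ (insert i S))) else 0)
      = ∑ U, φ U * (w U.card * (∑ i : Fin r, if i ∉ U then ((i : ℤ) + 1) else 0) -
          w (U.card - 1) * (∑ i : Fin r, if i ∈ U then ((i : ℤ) + 1) else 0)) := by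
    have x : ∀ i : Fin r, ∑ S, (if i ∉ S then w S.card * (((i : ℤ) + 1) * (φ S - φ (insert i S))) else 0)
       = ∑ U, (φ U * (w U.card * if i ∉ U then ((i : ℤ) + 1) else 0) -
          φ U * (w (U.card - 1) * if i ∈ U then ((i : ℤ) + 1) else 0)) := by
      intro i
      have y := sum_insert_reindex i (fun U => w (U.card - 1) * (((i : ℤ) + 1) * φ U))
      have z : ∀ S : Finset (Fin r), (if i ∉ S then w S.card * (((i : ℤ) + 1) * (φ S - φ (insert i S))) else 0) =
          (if i ∉ S then w S.card * (((i : ℤ) + 1) * φ S) else 0) -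
          (if i ∉ S then w ((insert i S).card - 1) * (((i : ℤ) + 1) * φ (insert i S)) else 0) := by
        intro S
        by_cases hi : i ∈ S
        · simp [hi]
        · simp [hi]; ring
      rw [Finset.sum_congr rfl fun S _ => z S, Finset.sum_sub_distrib, y, ← Finset.sum_sub_distrib]
      refine Finset.sum_congr rfl fun U _ => ?_
      by_cases hi : i ∈ U <;> simp [hi] <;> ring
    rw [Finset.sum_congr rfl fun i _ => x i, Finset.sum_comm]
    refine Finset.sum_congr rfl fun U _ => ?_
    rw [Finset.sum_sub_distrib, ← Finset.mul_sum, ← Finset.mul_sum, ← Finset.mul_sum, ← Finset.mul_sum]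
    ring
  have step4 : ∑ i : Fin r, ∑ j : Fin r, (if i < j then
          ∑ U, (if i ∈ U ∧ j ∉ U then (w (U.card - 1) + w U.card) * φ U else 0) else 0) =
      ∑ U, φ U * ((w (U.card - 1) + w U.card) *
        ∑ i : Fin r, ∑ j : Fin r, (if i < j then (if i ∈ U ∧ j ∉ U then (1 : ℤ) else 0) else 0)) := by
    have x : ∀ i j : Fin r, (if i < j then
          ∑ U, (if i ∈ U ∧ j ∉ U then (w (U.card - 1) + w U.card) * φ U else 0) else 0) =
        ∑ U, φ U * ((w (U.card - 1) + w U.card) * (if i < j then (if i ∈ U ∧ j ∉ U then (1 : ℤ) else 0) else 0)) := by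
      intro i j
      split_ifs
      · refine Finset.sum_congr rfl fun U _ => ?_
        split_ifs <;> ring
      · simp
    simp only [x]
    conv_lhs =>
      congr
      · skip
      · ext i
        rw [Finset.sum_comm]
    rw [Finset.sum_comm]
    refine Finset.sum_congr rfl fun U _ => ?_
    simp only [Finset.mul_sum]
  have h := step3.symm.trans (step2.trans step4)
  rw [← sub_eq_zero, ← Finset.sum_sub_distrib] at h
  have h2 := congrArg (fun x => 2 * x) h
  simp only [mul_zero, Finset.mul_sum (a := (2 : ℤ))] at h2
  rw [← h2]
  refine Finset.sum_congr rfl fun U _ => ?_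
  have il := inv_lemma U
  have tot : 2 * (∑ i : Fin r, (if i ∉ U then ((i : ℤ) + 1) else 0) +
      ∑ i : Fin r, (if i ∈ U then ((i : ℤ) + 1) else 0)) = r * (r + 1) := by
    rw [← Finset.sum_add_distrib]
    have : ∀ i : Fin r, ((if i ∉ U then ((i : ℤ) + 1) else 0) + (if i ∈ U then ((i : ℤ) + 1) else 0)) = (i : ℤ) + 1 := by
      intro i; by_cases h : i ∈ U <;> simp [h]
    rw [Finset.sum_congr rfl fun i _ => this i]
    have il0 := inv_lemma (∅ : Finset (Fin r))
    simpa using il0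
  rw [← il, ← tot]
  ring

/-- The shifted netflow. -/
def NS {r : ℕ} (S : Finset (Fin r)) : Fin r → ℤ := fun i => (i : ℤ) + 1 - if i ∈ S then 1 else 0

theorem NS_insert {r : ℕ} (S : Finset (Fin r)) {i : Fin r} (hi : i ∉ S) :
    NS S = NS (insert i S) + Pi.single i 1 := by
  funext a
  by_cases h : a = i
  · subst h; simp [NS, hi]
  · simp [NS, h]

/-- Elementary symmetric averages. -/
noncomputable def II (r k : ℕ) : ℤ :=
  ∑ U ∈ (Finset.univ : Finset (Finset (Fin r))).filter (fun U => U.card = k), kk r (NS U)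

theorem II_rel (r k : ℕ) (hk : k < r) :
    (((r : ℤ) - k) * (r - k + 1)) * II r k = (((k : ℤ) + 1) * (2 * r - k)) * II r (k + 1) := by
  have h := aomoto_abs (r := r) (fun c => if c = k then 1 else 0) (fun S => kk r (NS S))
    (fun i S => bb r i (NS S)) (fun i j S => tt r i j (NS S)) ?_ ?_ ?_
  · have e : ∀ U : Finset (Fin r), kk r (NS U) * ((if U.card = k then 1 else 0) * (((r : ℤ) - U.card) * ((r : ℤ) - U.card + 1)) -
      (if U.card - 1 = k then 1 else 0) * ((r : ℤ) * (r + 1) - ((r : ℤ) - U.card) * ((r : ℤ) - U.card + 1))) =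
      (if U.card = k then (((r : ℤ) - k) * (r - k + 1)) * kk r (NS U) else 0) -
      (if U.card = k + 1 then (((k : ℤ) + 1) * (2 * r - k)) * kk r (NS U) else 0) := by
      intro U
      rcases Nat.eq_zero_or_pos U.card with h0 | h0
      · by_cases hk0 : k = 0
        · subst hk0; simp [h0]; ring
        · simp [h0, Ne.symm hk0]
      · have e1 : (U.card - 1 = k) ↔ (U.card = k + 1) := by omega
        simp only [e1]
        by_cases h1 : U.card = k
        · have h2 : ¬ U.card = k + 1 := by omega
          simp [h1]; ring
        · by_cases h2 : U.card = k + 1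
          · simp [h2]; ring
          · simp [h1, h2]
    rw [Finset.sum_congr rfl fun U _ => e U, Finset.sum_sub_distrib, ← Finset.sum_filter,
      ← Finset.sum_filter, ← Finset.mul_sum, ← Finset.mul_sum] at h
    unfold II
    linarith
  · intro i S
    exact kk_eq r (NS S) i
  · intro i S hi
    show bb r i (NS S) = _
    rw [NS_insert S hi, bb_shift]
  · intro i j hij R hi hj
    have h1 : i ∉ insert j R := by simp [hi, hij.ne]
    have h2 : j ∉ insert i R := by simp [hj, hij.ne']
    have e1 := NS_insert (insert j R) h1
    have e2 := NS_insert (insert i R) h2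
    rw [Finset.insert_comm] at e2
    show tt r i j (NS (insert j R)) = tt r i j (NS (insert i R)) + kk r (NS (insert i R))
    rw [e1, e2]
    exact tt_shift r _ hij

theorem II_chain (r k : ℕ) (hk : k ≤ r) :
    II r 0 * ((r.factorial * (r + 1).factorial * (2 * r - k).factorial : ℕ) : ℤ) =
      ((k.factorial * (2 * r).factorial * (r - k).factorial * (r + 1 - k).factorial : ℕ) : ℤ) * II r k := by
  induction k with
  | zero => simp; ring
  | succ k ih =>
    have ih := ih (by omega)
    obtain ⟨d, rfl⟩ : ∃ d, r = k + 1 + d := ⟨r - (k + 1), by omega⟩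
    have rel := II_rel (k + 1 + d) k (by omega)
    generalize II (k + 1 + d) k = A at *
    generalize II (k + 1 + d) (k + 1) = B at *
    generalize II (k + 1 + d) 0 = C at *
    rw [show 2 * (k + 1 + d) - k = (k + 2 * d + 1) + 1 by omega, show k + 1 + d - k = d + 1 by omega,
      show k + 1 + d + 1 - k = d + 1 + 1 by omega] at ih
    rw [show 2 * (k + 1 + d) - (k + 1) = (k + 2 * d + 1) by omega, show k + 1 + d - (k + 1) = d by omega,
      show k + 1 + d + 1 - (k + 1) = d + 1 by omega]
    generalize (k + 1 + d + 1).factorial = F1 at *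
    generalize (k + 1 + d).factorial = F2 at *
    generalize (2 * (k + 1 + d)).factorial = F3 at *
    rw [Nat.factorial_succ (k + 2 * d + 1), Nat.factorial_succ (d + 1), Nat.factorial_succ d] at ih
    rw [Nat.factorial_succ k, Nat.factorial_succ d]
    push_cast at ih rel ⊢
    have hne : (k : ℤ) + 2 * d + 2 ≠ 0 := by positivity
    apply mul_left_cancel₀ hne
    linear_combination ih + (k.factorial : ℤ) * F3 * d.factorial * (d + 1) * d.factorial * rel

theorem II_zero (r : ℕ) : II r 0 = zz (r + 1) := by
  have : (Finset.univ : Finset (Finset (Fin r))).filter (fun U => U.card = 0) = {∅} := by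
    ext U; simp
  unfold II
  rw [this, Finset.sum_singleton]
  unfold zz ki kk
  rw [Kn_delete _ 0 (by
    rw [← Fin.castSucc_zero, extend_castSucc]; simp [rho])]
  simp only [Finset.piAntidiag_zero, Finset.sum_singleton]
  congr 2
  funext j
  refine Fin.lastCases ?_ (fun j => ?_) j
  · rw [Fin.succ_last, extend_last, extend_last, Fin.sum_univ_succ]
    simp [NS, rho]
    refine Finset.sum_congr rfl fun x _ => ?_
    have := x.2.ne
    simp [this]
  · rw [extend_castSucc, Fin.succ_castSucc, extend_castSucc]
    simp [NS, rho, j.2.ne]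

theorem II_top (r : ℕ) : II r r = zz r := by
  have : (Finset.univ : Finset (Finset (Fin r))).filter (fun U => U.card = r) = {Finset.univ} := by
    ext U
    simp only [Finset.mem_filter, Finset.mem_univ, true_and, Finset.mem_singleton]
    have hU := Finset.card_eq_iff_eq_univ U
    rwa [Fintype.card_fin] at hU
  unfold II
  rw [this, Finset.sum_singleton]
  unfold zz ki
  congr 1
  funext i
  simp [NS, rho, i.2.ne]

theorem zz_succ (r : ℕ) : zz (r + 1) = catalan r * zz r := by
  have h := II_chain r r le_rfl
  rw [II_zero, II_top, show 2 * r - r = r by omega, Nat.sub_self, show r + 1 - r = 1 by omega] at h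
  have c1 := succ_mul_catalan_eq_centralBinom r
  have c2 := Nat.centralBinom_eq_two_mul_choose r
  have c3 := Nat.choose_mul_factorial_mul_factorial (show r ≤ 2 * r by omega)
  rw [show 2 * r - r = r by omega, ← c2, ← c1] at c3
  rw [← c3, Nat.factorial_succ] at h
  have hp : (r.factorial : ℤ) ≠ 0 := by positivity
  have hp2 : (r : ℤ) + 1 ≠ 0 := by positivity
  push_cast at h
  simp only [Nat.factorial_zero, Nat.factorial_one, Nat.cast_one, mul_one] at h
  apply mul_left_cancel₀ (mul_ne_zero (mul_ne_zero (mul_ne_zero hp hp) hp) hp2)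
  linear_combination h

theorem zz_zero : zz 0 = 1 := by
  unfold zz ki kk
  rw [Kn_eq_card]
  have : flowSet 0 (extend 0 fun i => (rho 0 i.castSucc : ℤ)) = {fun _ _ => 0} := by
    ext f
    rw [mem_flowSet, Finset.mem_singleton]
    constructor
    · intro h
      funext i j
      exact h.1 i j (by omega)
    · rintro rfl
      refine ⟨by simp, ?_⟩
      intro i
      have hi : i = Fin.last 0 := Fin.ext (by omega)
      subst hi
      rw [extend_last]
      simp
  rw [this]; simp

theorem zz_prod (m : ℕ) : zz (m + 1) = ((∏ i ∈ Finset.Icc 1 m, catalan i : ℕ) : ℤ) := by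
  induction m with
  | zero => rw [zz_succ, zz_zero]; simp
  | succ m ih => rw [zz_succ, ih, Finset.prod_Icc_succ_top (by omega)]; push_cast; ring


theorem num_pow (n q : ℕ) (hq : q ≤ n) : (n + 1) ^ q ≤ n ^ q * (q + 1) := by
  induction q with
  | zero => simp
  | succ q ih =>
    have ih := ih (by omega)
    calc (n + 1) ^ (q + 1) = (n + 1) ^ q * (n + 1) := pow_succ _ _
      _ ≤ n ^ q * (q + 1) * (n + 1) := Nat.mul_le_mul_right _ ih
      _ = n ^ q * ((q + 1) * (n + 1)) := by ring
      _ ≤ n ^ q * (n * (q + 1 + 1)) := Nat.mul_le_mul_left _ (by nlinarith)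
      _ = n ^ (q + 1) * (q + 1 + 1) := by ring

theorem num_fact (n q : ℕ) (hq : q ≤ n) :
    (n + 1) ^ (q.choose 2) ≤ n ^ (q.choose 2) * q.factorial := by
  induction q with
  | zero => simp
  | succ q ih =>
    have ih := ih (by omega)
    have h := num_pow n q (by omega)
    rw [Nat.choose_succ_succ' q 1, Nat.choose_one_right, pow_add, pow_add, Nat.factorial_succ]
    calc (n + 1) ^ q * (n + 1) ^ (q.choose 2)
        ≤ (n ^ q * (q + 1)) * (n ^ (q.choose 2) * q.factorial) := Nat.mul_le_mul h ih
      _ = _ := by ring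

theorem num_step (n D a : ℕ) (hn : 0 < n) (hD : 0 < D) (h : (n + 1) * D ≤ a + 1) :
    n * (a + 1).choose D ≤ (n + 1) * a.choose D := by
  obtain ⟨c, hc⟩ : ∃ c, a + 1 = D + c := ⟨a + 1 - D, by
    have : D ≤ (n + 1) * D := Nat.le_mul_of_pos_left _ (by omega)
    omega⟩
  have e := Nat.choose_mul_succ_eq a D
  rw [show a + 1 - D = c by omega] at e
  have hcp : n * D ≤ c := by nlinarith
  have hc0 : 0 < c := lt_of_lt_of_le (Nat.mul_pos hn hD) hcp
  refine Nat.le_of_mul_le_mul_right ?_ hc0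
  calc n * (a + 1).choose D * c = n * (a.choose D * (a + 1)) := by rw [e]; ring
    _ = a.choose D * (n * (a + 1)) := by ring
    _ ≤ a.choose D * ((n + 1) * c) := Nat.mul_le_mul_left _ (by rw [hc]; nlinarith)
    _ = _ := by ring

theorem num_iter (n D a s : ℕ) (hn : 0 < n) (hD : 0 < D) (h : (n + 1) * D ≤ a + 1) :
    n ^ s * (a + s).choose D ≤ (n + 1) ^ s * a.choose D := by
  induction s with
  | zero => simp
  | succ s ih =>
    have st := num_step n D (a + s) hn hD (by omega)
    calc n ^ (s + 1) * (a + (s + 1)).choose D = n ^ s * (n * (a + s + 1).choose D) := by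
          rw [← add_assoc]; ring
      _ ≤ n ^ s * ((n + 1) * (a + s).choose D) := Nat.mul_le_mul_left _ st
      _ = (n + 1) * (n ^ s * (a + s).choose D) := by ring
      _ ≤ (n + 1) * ((n + 1) ^ s * a.choose D) := Nat.mul_le_mul_left _ ih
      _ = _ := by ring

theorem num_main (m t : ℕ) (hm : 0 < m) (ht : (m + 1) ^ 3 ≤ 2 * t) :
    (t + (m.choose 2 + m)).choose (m.choose 2 + m) ≤
      m.factorial * (t + m).choose (m.choose 2 + m) := by
  have hD : 2 * (m.choose 2 + m) = (m + 1) * m := by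
    have h2 := Nat.choose_two_right (m + 1)
    rw [Nat.choose_succ_succ' m 1, Nat.choose_one_right] at h2
    have h3 : 2 ∣ (m + 1) * m := by
      rw [mul_comm]; exact (Nat.even_mul_succ_self m).two_dvd
    rw [Nat.add_sub_cancel, show 1 + 1 = 2 from rfl] at h2
    omega
  have it := num_iter (m + 1) (m.choose 2 + m) (t + m) (m.choose 2) (by omega) (by omega) (by
    nlinarith)
  have f := num_fact (m + 1) m (by omega)
  rw [show t + m + m.choose 2 = t + (m.choose 2 + m) by ring] at it
  refine le_of_mul_le_mul_left (a := (m + 1) ^ (m.choose 2)) ?_ (by positivity)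
  calc _ ≤ _ := it
    _ ≤ (m + 1) ^ (m.choose 2) * m.factorial * (t + m).choose (m.choose 2 + m) :=
      Nat.mul_le_mul_right _ f
    _ = _ := by ring

/-- **Theorem (bounds from the Lidskii formula).** For `n ≥ 2` and integer
`t ≥ n³/2`,
`(n−1)! · C(t+n−1, C(n,2)) · ∏_{i=1}^{n−2} Cat_i ≥ K_n(t,0,…,0,−t)
  ≥ C(t+n−1, C(n,2)) · ∏_{i=1}^{n−2} Cat_i`,
where `Cat_i` is the `i`-th Catalan number. -/
theorem kostant_CRY_Lidskii_bounds (n t : ℕ) (hn : 2 ≤ n) (ht : n ^ 3 ≤ 2 * t) :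
    Kn n (fun i => if (i : ℕ) = 0 then (t : ℤ) else if (i : ℕ) = n then -(t : ℤ) else 0) ≤
        Nat.factorial (n - 1) * Nat.choose (t + n - 1) (Nat.choose n 2) *
          ∏ i ∈ Finset.Icc 1 (n - 2), catalan i ∧
    Nat.choose (t + n - 1) (Nat.choose n 2) * ∏ i ∈ Finset.Icc 1 (n - 2), catalan i ≤
      Kn n (fun i =>
        if (i : ℕ) = 0 then (t : ℤ) else if (i : ℕ) = n then -(t : ℤ) else 0) := by
  obtain ⟨p, rfl⟩ : ∃ p, n = p + 1 + 1 := ⟨n - 2, by omega⟩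
  have hK := Kn_eq_lam (p + 1) t
  have hl := lower (p + 1) t
  have hu := upper (p + 1) t
  have hnum := num_main (p + 1) t (by omega) ht
  rw [← hK, zz_prod] at hl hu
  rw [show p + 1 + 1 - 1 = p + 1 by omega, show p + 1 + 1 - 2 = p by omega,
    show t + (p + 1 + 1) - 1 = t + (p + 1) by omega,
    show (p + 1 + 1).choose 2 = (p + 1).choose 2 + (p + 1) by
      rw [Nat.choose_succ_succ' (p + 1) 1, Nat.choose_one_right, add_comm]]
  constructor
  · refine le_trans ?_ (Nat.mul_le_mul_right _ hnum)
    exact_mod_cast hu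
  · exact_mod_cast hl
end

section
/- Let n ≥ 1 and let j = (j_0, …, j_{n−1}) be a weak composition of binom(n,2), i.e., nonnegative integers with j_0 + ⋯ + j_{n−1} = binom(n,2). Then K_n(j_0 − (n−1), j_1 − (n−2), …, j_{n−2} − 1, j_{n−1}, 0) > 0 if and only if j dominates δ = (n−1, n−2, …, 1, 0), i.e., ∑_{i=0}^{k} j_i ≥ ∑_{i=0}^{k} (n−1−i) for every 0 ≤ k ≤ n−1. -/
open Finset

/-- Partial sums of the netflow over the vertices `< m`. -/
def psum (n : ℕ) (N : Fin (n + 1) → ℤ) (m : ℕ) : ℤ :=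
  ∑ i : Fin (n + 1), if (i : ℕ) < m then N i else 0

theorem psum_cut (n : ℕ) (N : Fin (n + 1) → ℤ) (f : Fin (n + 1) → Fin (n + 1) → ℕ)
    (hf : IsIntFlow n N f) (m : ℕ) :
    psum n N m = ∑ i : Fin (n + 1), ∑ j : Fin (n + 1),
      if (i : ℕ) < m ∧ m ≤ (j : ℕ) then (f i j : ℤ) else 0 := by
  have h1 : psum n N m = (∑ i : Fin (n + 1), ∑ j : Fin (n + 1),
      if (i : ℕ) < m ∧ i < j then (f i j : ℤ) else 0) -
      ∑ i : Fin (n + 1), ∑ k : Fin (n + 1),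
      if (i : ℕ) < m ∧ k < i then (f k i : ℤ) else 0 := by
    unfold psum
    rw [← Finset.sum_sub_distrib]
    refine Finset.sum_congr rfl fun i _ => ?_
    by_cases h : (i : ℕ) < m
    · simp only [h, if_true, true_and]
      exact (hf.2 i).symm
    · simp [h]
  rw [h1, Finset.sum_comm (f := fun i k : Fin (n + 1) =>
    if (i : ℕ) < m ∧ k < i then (f k i : ℤ) else 0), ← Finset.sum_sub_distrib]
  refine Finset.sum_congr rfl fun i _ => ?_
  rw [← Finset.sum_sub_distrib]
  refine Finset.sum_congr rfl fun j _ => ?_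
  simp only [Fin.lt_def]
  split_ifs <;> first | omega | simp

theorem le_psum (n : ℕ) (N : Fin (n + 1) → ℤ) (f : Fin (n + 1) → Fin (n + 1) → ℕ)
    (hf : IsIntFlow n N f) (i j : Fin (n + 1)) :
    (f i j : ℤ) ≤ max 0 (psum n N (i + 1)) := by
  by_cases h : i < j
  · refine le_trans ?_ (le_max_right _ _)
    rw [psum_cut n N f hf]
    have hnn : ∀ a b : Fin (n + 1), (0 : ℤ) ≤
        if (a : ℕ) < (i : ℕ) + 1 ∧ (i : ℕ) + 1 ≤ (b : ℕ) then (f a b : ℤ) else 0 := by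
      intro a b
      split_ifs <;> simp
    refine le_trans ?_ (Finset.single_le_sum
      (f := fun a : Fin (n + 1) => ∑ b : Fin (n + 1),
        if (a : ℕ) < (i : ℕ) + 1 ∧ (i : ℕ) + 1 ≤ (b : ℕ) then (f a b : ℤ) else 0)
      (fun a _ => Finset.sum_nonneg fun b _ => hnn a b) (Finset.mem_univ i))
    refine le_trans ?_ (Finset.single_le_sum
      (f := fun b : Fin (n + 1) =>
        if (i : ℕ) < (i : ℕ) + 1 ∧ (i : ℕ) + 1 ≤ (b : ℕ) then (f i b : ℤ) else 0)
      (fun b _ => hnn i b) (Finset.mem_univ j))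
    have : (i : ℕ) + 1 ≤ j := h
    simp [this]
  · rw [hf.1 i j h]
    simp

theorem finite_flow (n : ℕ) (N : Fin (n + 1) → ℤ) :
    Finite {f : Fin (n + 1) → Fin (n + 1) → ℕ // IsIntFlow n N f} := by
  have : ({f | IsIntFlow n N f} : Set (Fin (n + 1) → Fin (n + 1) → ℕ)).Finite := by
    refine (Set.finite_Iic (fun i _ : Fin (n + 1) => (psum n N (i + 1)).toNat)).subset ?_
    intro f hf i j
    have := le_psum n N f hf i j
    show f i j ≤ (psum n N (i + 1)).toNat
    omega
  exact this.to_subtype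

theorem psum_succ (n : ℕ) (N : Fin (n + 1) → ℤ) (i : Fin (n + 1)) :
    psum n N (i + 1) - psum n N i = N i := by
  unfold psum
  rw [← Finset.sum_sub_distrib, Finset.sum_eq_single i]
  · simp
  · intro b _ hb
    have : (b : ℕ) ≠ i := fun h => hb (Fin.ext h)
    split_ifs <;> first | omega | simp
  · simp

theorem exists_flow (n : ℕ) (N : Fin (n + 1) → ℤ) (h0 : ∀ m, 0 ≤ psum n N m)
    (hn : psum n N (n + 1) = 0) : ∃ f, IsIntFlow n N f := by
  refine ⟨fun i j => if (j : ℕ) = i + 1 then (psum n N j).toNat else 0, ?_, ?_⟩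
  · intro i j h
    refine if_neg ?_
    rw [Fin.lt_def] at h
    omega
  · intro i
    rw [← psum_succ n N i]
    congr 1
    · by_cases hi : (i : ℕ) < n
      · rw [Finset.sum_eq_single (⟨i + 1, by omega⟩ : Fin (n + 1))]
        · simp [Fin.lt_def, h0]
        · intro b _ hb
          have : (b : ℕ) ≠ i + 1 := fun h => hb (Fin.ext h)
          simp [this]
        · simp
      · have : (i : ℕ) = n := by omega
        rw [this, hn]
        refine Finset.sum_eq_zero fun b _ => ?_
        rw [if_neg]
        rw [Fin.lt_def]
        omega
    · by_cases hi : (i : ℕ) = 0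
      · rw [hi]
        simp [psum, Fin.lt_def, hi]
      · rw [Finset.sum_eq_single (⟨i - 1, by omega⟩ : Fin (n + 1))]
        · have h1 : (i : ℕ) = i - 1 + 1 := by omega
          have h2 : (i : ℕ) - 1 < i := by omega
          simp only [Fin.lt_def, h2, if_true]
          rw [if_pos h1]
          simp [h0]
        · intro b _ hb
          have : (i : ℕ) ≠ b + 1 := fun h => hb (Fin.ext (by simp; omega))
          simp [this]
        · simp

theorem Kn_pos_iff (n : ℕ) (N : Fin (n + 1) → ℤ) (hn : psum n N (n + 1) = 0) :
    0 < Kn n N ↔ ∀ m, 0 ≤ psum n N m := by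
  have := finite_flow n N
  unfold Kn
  rw [Nat.card_pos_iff]
  constructor
  · rintro ⟨⟨f, hf⟩, _⟩ m
    rw [psum_cut n N f hf]
    refine Finset.sum_nonneg fun i _ => Finset.sum_nonneg fun j _ => ?_
    split_ifs <;> simp
  · intro h
    obtain ⟨f, hf⟩ := exists_flow n N h hn
    exact ⟨⟨⟨f, hf⟩⟩, this⟩

theorem psum_jd (n : ℕ) (j : Fin n → ℕ) (m : ℕ) :
    psum n (fun i : Fin (n + 1) =>
        if h : (i : ℕ) < n then (j ⟨(i : ℕ), h⟩ : ℤ) - ((n : ℤ) - 1 - ((i : ℕ) : ℤ))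
        else 0) m = ((∑ i : Fin n, if (i : ℕ) < m then j i else 0 : ℕ) : ℤ) -
        ((∑ i : Fin n, if (i : ℕ) < m then (n - 1 - (i : ℕ)) else 0 : ℕ) : ℤ) := by
  unfold psum
  rw [Fin.sum_univ_castSucc]
  push_cast
  rw [← Finset.sum_sub_distrib]
  simp only [Fin.val_castSucc, Fin.is_lt, dite_true, Fin.val_last, lt_irrefl, dite_false,
    ite_self, add_zero]
  refine Finset.sum_congr rfl fun i _ => ?_
  have := i.2
  split_ifs
  · rw [show ((n - 1 - (i : ℕ) : ℕ) : ℤ) = (n : ℤ) - 1 - (i : ℕ) by omega]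
  · simp

theorem sum_delta (n : ℕ) : ∑ i : Fin n, (n - 1 - (i : ℕ)) = Nat.choose n 2 := by
  rw [Fin.sum_univ_eq_sum_range (fun i => n - 1 - i) n, Finset.sum_range_reflect (fun i => i) n,
    Finset.sum_range_id, Nat.choose_two_right]

/-- **Proposition (positivity in the Lidskii formula).** For a weak composition
`j = (j_0,…,j_{n−1})` of `C(n,2)`, one has `K_n(j − δ, 0) > 0` (where
`δ = (n−1, n−2, …, 1, 0)` and the netflow vector has a final coordinate `0`)
if and only if `j` dominates `δ`. -/
theorem kostant_jminusdelta_pos_iff_dominates (n : ℕ) (hn : 1 ≤ n)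
    (j : Fin n → ℕ) (hsum : ∑ i, j i = Nat.choose n 2) :
    0 < Kn n (fun i : Fin (n + 1) =>
        if h : (i : ℕ) < n then (j ⟨(i : ℕ), h⟩ : ℤ) - ((n : ℤ) - 1 - ((i : ℕ) : ℤ))
        else 0) ↔
      ∀ k : Fin n,
        (∑ i : Fin n, if i ≤ k then (n - 1 - (i : ℕ)) else 0) ≤
          ∑ i : Fin n, if i ≤ k then j i else 0 := by
  have key : ∀ m, n ≤ m → psum n (fun i : Fin (n + 1) =>
        if h : (i : ℕ) < n then (j ⟨(i : ℕ), h⟩ : ℤ) - ((n : ℤ) - 1 - ((i : ℕ) : ℤ))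
        else 0) m = 0 := by
    intro m hm
    rw [psum_jd]
    have hlt : ∀ i : Fin n, (i : ℕ) < m := fun i => lt_of_lt_of_le i.2 hm
    simp only [hlt, if_true]
    rw [hsum, sum_delta, sub_self]
  rw [Kn_pos_iff n _ (key _ (Nat.le_succ n))]
  constructor
  · intro h k
    have := h (k + 1)
    rw [psum_jd] at this
    simp only [Nat.lt_succ_iff, ← Fin.le_def] at this
    omega
  · intro h m
    by_cases hm : n ≤ m
    · rw [key m hm]
    · rcases m with _ | m
      · simp [psum]
      · have := h ⟨m, by omega⟩
        rw [psum_jd]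
        simp only [Fin.le_def] at this
        simp only [Nat.lt_succ_iff]
        omega
end
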